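/- Let n ≥ 8 with n ≡ 2 (mod 3). For a generic choice of linear subspaces L, M ⊂ ℂ^{n+1} of dimension n−3 (codimension 4), of (4n−14)/3 points l₁,…,l_{(4n−14)/3} ∈ L and (4n−14)/3 points m₁,…,m_{(4n−14)/3} ∈ M, and of five points p₁,…,p₅ ∈ ℂ^{n+1}, the ℂ-vector space of homogeneous cubic polynomials in ℂ[x₀,…,xₙ] that vanish at every point of L ∪ M and are singular at all the points lᵢ, mᵢ, p₁,…,p₅ has dimension (n+1)/3. Moreover, every cubic in this space is singular at every point of the subspace L ∩ M, and the common singular locus of the space is zero-dimensional at each of the five points p₁,…,p₅. -/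

import Mathlib

/-!
The dimension is bounded below for all parameters, and the remaining claims are open conditions
that are verified at one explicit configuration.

*Lower bound* (`lower_bound`). Let `W₀`, `W₁` be two subspaces of codimension `4` which span
`ℂ^{n+1}`. In coordinates `x` (vanishing on `W₀`), `y` (vanishing on `W₁`) and `z`, the cubics
which vanish on `W₀ ∪ W₁` are the combinations of monomials of type `xxy`, `xyy` and `xyz`; they
form a space of dimension `40 + 40 + 16 (n - 7)`. At a point of `W₀` the gradient of such a cubic
annihilates `W₀`, so being singular there costs `4` conditions instead of `n + 1`, and likewise
for `W₁`. With `(4n - 14)/3` points on each subspace and `5` free points, a space of dimension at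
least `(n + 1)/3` remains.

*Upper bound* (`config_elim`, `semicont`). Write `n = 8 + 3k`. In the example the `z`-coordinates
consist of one distinguished coordinate and `k` blocks of three. Six of the points on each subspace
involve no block, and to each block belong four further points on each subspace, every one of which
differs from one of the first six by a vector of that block. The linear system therefore splits into
a base system, with a solution space of dimension `3` (`base_elim`), and `k` copies of one block
system, with a solution space of dimension `1` (`blk_elim`). Hence the dimension is at most
`3 + k = (n + 1)/3` in the example, and so generically. Cramer's rule moreover yields cubics
`G i t`, polynomial in the parameters `t`, which lie in the space belonging to `t` for generic `t`
and which span the space of the example.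

*Isolated singular points* (`isolated`, `config_hess`). If the Hessians of the `G i t` at one of the
free points `p` have no common kernel beyond the line through `p`, then near `p` the common singular
locus lies on this line. This condition on Hessians is open, and it holds in the example, where it
can again be checked on the base part and on one block at a time.

*Singularity along the intersection* (`singular_inf`). At a point of `W₀ ∩ W₁` the gradient
annihilates both `W₀` and `W₁`, and these span everything.
-/

open MvPolynomial

noncomputable section

/-- The linear form `a₀x₀ + ⋯ + aₙxₙ` with coefficient vector `a`. -/
def linForm {n : ℕ} (a : Fin (n + 1) → ℂ) : MvPolynomial (Fin (n + 1)) ℂ :=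
  ∑ i, C (a i) * X i

/-- Evaluation at the point `v`, as a linear map. -/
def evalAt {n : ℕ} (v : Fin (n + 1) → ℂ) : MvPolynomial (Fin (n + 1)) ℂ →ₗ[ℂ] ℂ :=
  (aeval v).toLinearMap

/-- The linear map `f ↦ (∂f/∂xᵢ)(p)`. -/
def evalPDeriv {n : ℕ} (p : Fin (n + 1) → ℂ) (i : Fin (n + 1)) :
    MvPolynomial (Fin (n + 1)) ℂ →ₗ[ℂ] ℂ :=
  evalAt p ∘ₗ (pderiv i).toLinearMap

/-- `f` is singular at `p`: all partial derivatives of `f` vanish at `p`. -/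
def SingularAt {n : ℕ} (f : MvPolynomial (Fin (n + 1)) ℂ) (p : Fin (n + 1) → ℂ) : Prop :=
  ∀ i, evalPDeriv p i f = 0

/-- The space of homogeneous degree-`d` polynomials in `n+1` variables that vanish at every
point of `V` and are singular at every point of `S`. -/
def SingSpace (n : ℕ) (d : ℕ) (S V : Set (Fin (n + 1) → ℂ)) :
    Submodule ℂ (MvPolynomial (Fin (n + 1)) ℂ) :=
  homogeneousSubmodule (Fin (n + 1)) ℂ d ⊓ (⨅ v ∈ V, LinearMap.ker (evalAt v)) ⊓
    ⨅ p ∈ S, ⨅ i, LinearMap.ker (evalPDeriv p i)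

/-- A property of parameters `t : ι → ℂ` holds for a generic choice of `t` if there is a
nonzero polynomial `F` in the variables `ι` such that the property holds whenever
`F(t) ≠ 0`. -/
def Generic {ι : Type} [Fintype ι] (P : (ι → ℂ) → Prop) : Prop :=
  ∃ F : MvPolynomial ι ℂ, F ≠ 0 ∧ ∀ t : ι → ℂ, eval t F ≠ 0 → P t

end

namespace CubicSing

/-! ### Cubic forms and their partial derivatives -/

variable {n : ℕ}

theorem mem_SingSpace {d : ℕ} {S V : Set (Fin (n + 1) → ℂ)} {f : MvPolynomial (Fin (n + 1)) ℂ} :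
    f ∈ SingSpace n d S V ↔ f.IsHomogeneous d ∧ (∀ v ∈ V, eval v f = 0) ∧
      ∀ p ∈ S, ∀ i, eval p (pderiv i f) = 0 := by
  simp [SingSpace, Submodule.mem_iInf, evalAt, evalPDeriv, and_assoc, aeval_eq_eval]

theorem evalPDeriv_apply (p : Fin (n + 1) → ℂ) (i : Fin (n + 1))
    (f : MvPolynomial (Fin (n + 1)) ℂ) : evalPDeriv p i f = eval p (pderiv i f) := by
  simp [evalPDeriv, evalAt, aeval_eq_eval]

/-- Kronecker delta with complex values. -/
noncomputable def δ {σ : Type*} [DecidableEq σ] (x a : σ) : ℂ := if x = a then 1 else 0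

theorem pderiv_X' {σ : Type*} [DecidableEq σ] (a x : σ) :
    pderiv a (X x : MvPolynomial σ ℂ) = C (δ x a) := by
  rw [pderiv_X, Pi.single_apply, δ]
  split_ifs <;> simp

/-- Chain rule for the restriction of a polynomial to the affine line `v + s w`. -/
theorem derivative_line {σ : Type*} [Fintype σ] (v w : σ → ℂ) (f : MvPolynomial σ ℂ) :
    Polynomial.derivative (aeval (fun i => Polynomial.C (v i) + Polynomial.C (w i) * Polynomial.X) f)
      = ∑ i, Polynomial.C (w i) *
        aeval (fun i => Polynomial.C (v i) + Polynomial.C (w i) * Polynomial.X) (pderiv i f) := by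
  classical
  induction f using MvPolynomial.induction_on with
  | C a => simp
  | add p q hp hq => simp [hp, hq, mul_add, Finset.sum_add_distrib]
  | mul_X p j hp =>
    have hL : Polynomial.derivative (Polynomial.C (v j) + Polynomial.C (w j) * Polynomial.X)
        = Polynomial.C (w j) := by simp
    rw [map_mul, Polynomial.derivative_mul, hp, aeval_X, hL, Finset.sum_mul]
    simp only [pderiv_mul, pderiv_X', map_add, map_mul, aeval_X, mul_add, Finset.sum_add_distrib]
    have A : ∀ x y z u : Polynomial ℂ, x = z → y = u → x + y = z + u := by
      rintro _ _ _ _ rfl rfl; rfl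
    refine A _ _ _ _ ?_ ?_
    · simp only [mul_assoc]
    · rw [Finset.sum_eq_single j]
      · simp [δ]
        exact mul_comm _ _
      · intro i _ hi
        simp [δ, hi.symm]
      · simp

/-- A polynomial vanishing on an affine line has zero derivative along it. -/
theorem deriv_eq_zero {σ : Type*} [Fintype σ] {v w : σ → ℂ} {f : MvPolynomial σ ℂ}
    (h : ∀ s : ℂ, eval (v + s • w) f = 0) : ∑ i, w i * eval v (pderiv i f) = 0 := by
  have key : ∀ (s : ℂ) (g : MvPolynomial σ ℂ), Polynomial.eval s
      (aeval (fun i => Polynomial.C (v i) + Polynomial.C (w i) * Polynomial.X) g)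
      = eval (v + s • w) g := by
    intro s g
    induction g using MvPolynomial.induction_on with
    | C a => simp
    | add p q hp hq => simp [hp, hq]
    | mul_X p j hp => simp [hp]; left; ring
  have h0 : (aeval (fun i => Polynomial.C (v i) + Polynomial.C (w i) * Polynomial.X) f
      : Polynomial ℂ) = 0 := Polynomial.funext fun s => by rw [key, h, Polynomial.eval_zero]
  have h1 := derivative_line v w f
  rw [h0] at h1
  have h2 := congrArg (Polynomial.eval 0) h1
  simp only [map_zero, Polynomial.eval_zero, Polynomial.eval_finsetSum, Polynomial.eval_mul,
    Polynomial.eval_C, key, zero_smul, add_zero] at h2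
  exact h2.symm

/-- The third partial derivatives of `f` at the origin: for a homogeneous cubic, six times the
associated symmetric trilinear form. -/
noncomputable def T {σ : Type*} (f : MvPolynomial σ ℂ) (a b c : σ) : ℂ :=
  eval 0 (pderiv a (pderiv b (pderiv c f)))

theorem pderiv_comm' {σ : Type*} (a b : σ) (f : MvPolynomial σ ℂ) :
    pderiv a (pderiv b f) = pderiv b (pderiv a f) := by
  classical
  have : ⁅(pderiv a : Derivation ℂ (MvPolynomial σ ℂ) (MvPolynomial σ ℂ)),
      (pderiv b : Derivation ℂ (MvPolynomial σ ℂ) (MvPolynomial σ ℂ))⁆ = 0 := by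
    refine MvPolynomial.derivation_ext fun i => ?_
    rw [Derivation.commutator_apply, pderiv_X', pderiv_X', pderiv_C, pderiv_C, sub_zero,
      Derivation.zero_apply]
  have h := congrArg (fun D : Derivation ℂ (MvPolynomial σ ℂ) (MvPolynomial σ ℂ) => D f) this
  rw [Derivation.commutator_apply, Derivation.zero_apply, sub_eq_zero] at h
  exact h

theorem T_comm₁ {σ : Type*} (f : MvPolynomial σ ℂ) (a b c : σ) : T f a b c = T f b a c := by
  rw [T, pderiv_comm', T]

theorem T_comm₂ {σ : Type*} (f : MvPolynomial σ ℂ) (a b c : σ) : T f a b c = T f a c b := by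
  rw [T, pderiv_comm' b, T]

section Euler
variable {σ : Type*} [Fintype σ] {f : MvPolynomial σ ℂ}

/-- The Hessian of a cubic in terms of its third partial derivatives. -/
theorem eval_hess (hf : f.IsHomogeneous 3) (v : σ → ℂ) (b c : σ) :
    eval v (pderiv b (pderiv c f)) = ∑ a, T f a b c * v a := by
  have h1 : (pderiv b (pderiv c f)).IsHomogeneous 1 := (hf.pderiv (i := c)).pderiv
  have h := congrArg (eval v) h1.sum_X_mul_pderiv
  simp only [map_sum, map_mul, eval_X, one_smul] at h
  rw [← h]
  refine Finset.sum_congr rfl fun a _ => ?_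
  have h0 : (pderiv a (pderiv b (pderiv c f))).IsHomogeneous 0 := h1.pderiv
  obtain ⟨r, hr⟩ : ∃ r, pderiv a (pderiv b (pderiv c f)) = C r :=
    ⟨_, totalDegree_eq_zero_iff_eq_C.1 (Nat.le_zero.1 h0.totalDegree_le)⟩
  rw [T, hr]; simp [mul_comm]

/-- The gradient of a cubic in terms of its third partial derivatives. -/
theorem eval_grad (hf : f.IsHomogeneous 3) (v : σ → ℂ) (c : σ) :
    2 * eval v (pderiv c f) = ∑ b, (∑ a, T f a b c * v a) * v b := by
  have h1 : (pderiv c f).IsHomogeneous 2 := hf.pderiv (i := c)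
  have h := congrArg (eval v) h1.sum_X_mul_pderiv
  simp only [map_sum, map_mul, eval_X, eval_hess hf, nsmul_eq_mul] at h
  push_cast [map_ofNat] at h
  rw [← h]
  exact Finset.sum_congr rfl fun a _ => mul_comm _ _

/-- Euler's identity. -/
theorem eval_cubic (hf : f.IsHomogeneous 3) (v : σ → ℂ) :
    3 * eval v f = ∑ c, v c * eval v (pderiv c f) := by
  have h := congrArg (eval v) hf.sum_X_mul_pderiv
  simp only [map_sum, map_mul, eval_X, nsmul_eq_mul] at h
  push_cast [map_ofNat] at h
  exact h.symm

/-- A cubic all of whose third partial derivatives vanish is zero. -/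
theorem eq_zero_of_T (hf : f.IsHomogeneous 3) (h : ∀ a b c, T f a b c = 0) : f = 0 := by
  refine MvPolynomial.funext fun v => ?_
  have h1 : ∀ c, eval v (pderiv c f) = 0 := fun c => by
    have := eval_grad hf v c
    simpa [h] using this
  have := eval_cubic hf v
  simpa [h1] using this

end Euler

/-- A polynomial vanishing on a subspace `W` has zero derivative along `W` at points of `W`. -/
theorem deriv_subspace {σ : Type*} [Fintype σ] (W : Submodule ℂ (σ → ℂ)) {f : MvPolynomial σ ℂ}
    (h : ∀ v ∈ W, eval v f = 0) {v w : σ → ℂ} (hv : v ∈ W) (hw : w ∈ W) :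
    ∑ i, w i * eval v (pderiv i f) = 0 :=
  deriv_eq_zero fun s => h _ (W.add_mem hv (W.smul_mem s hw))

theorem pderiv_vanish {σ : Type*} [Fintype σ] [DecidableEq σ] (W : Submodule ℂ (σ → ℂ))
    {f : MvPolynomial σ ℂ} (h : ∀ v ∈ W, eval v f = 0) {a : σ} (ha : Pi.single a 1 ∈ W) :
    ∀ v ∈ W, eval v (pderiv a f) = 0 := fun v hv => by
  simpa [Pi.single_apply] using deriv_subspace W h hv ha

theorem T_vanish {σ : Type*} [Fintype σ] [DecidableEq σ] (W : Submodule ℂ (σ → ℂ))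
    {f : MvPolynomial σ ℂ} (h : ∀ v ∈ W, eval v f = 0) {a b c : σ} (ha : Pi.single a 1 ∈ W)
    (hb : Pi.single b 1 ∈ W) (hc : Pi.single c 1 ∈ W) : T f a b c = 0 :=
  pderiv_vanish W (pderiv_vanish W (pderiv_vanish W h hc) hb) ha 0 W.zero_mem

/-- The cubic whose array of third derivatives is `6 G`, for `G` symmetric. -/
noncomputable def ofArr {σ : Type*} [Fintype σ] (G : σ → σ → σ → ℂ) : MvPolynomial σ ℂ :=
  ∑ a, ∑ b, ∑ c, C (G a b c) * (X a * X b * X c)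

theorem ofArr_homog {σ : Type*} [Fintype σ] (G : σ → σ → σ → ℂ) : (ofArr G).IsHomogeneous 3 := by
  refine IsHomogeneous.sum _ _ _ fun a _ => IsHomogeneous.sum _ _ _ fun b _ =>
    IsHomogeneous.sum _ _ _ fun c _ => ?_
  exact (isHomogeneous_C _ _).mul (((isHomogeneous_X _ _).mul (isHomogeneous_X _ _)).mul
    (isHomogeneous_X _ _))

theorem T_ofArr {σ : Type*} [Fintype σ] {G : σ → σ → σ → ℂ} (h1 : ∀ a b c, G a b c = G b a c)
    (h2 : ∀ a b c, G a b c = G a c b) (a b c : σ) : T (ofArr G) a b c = 6 * G a b c := by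
  classical
  have e : ∀ x y z : σ, eval 0 (pderiv a (pderiv b (pderiv c
      (C (G x y z) * (X x * X y * X z) : MvPolynomial σ ℂ)))) =
      G x y z * (δ x a * δ y b * δ z c) + G x y z * (δ x a * δ y c * δ z b) +
      G x y z * (δ x b * δ y a * δ z c) + G x y z * (δ x b * δ y c * δ z a) +
      G x y z * (δ x c * δ y a * δ z b) + G x y z * (δ x c * δ y b * δ z a) := by
    intro x y z
    simp only [pderiv_mul, pderiv_X', map_add, map_mul, eval_C, eval_X, pderiv_C,
      Pi.zero_apply, map_zero]
    ring
  have s : ∀ a b c : σ, ∑ x, ∑ y, ∑ z, G x y z * (δ x a * δ y b * δ z c) = G a b c := by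
    intro a b c
    simp [δ]
  simp only [T, ofArr, map_sum, e, Finset.sum_add_distrib, s]
  rw [h2 a c b, h1 b a c, h2 b c a, h1 b a c, h1 c a b, h2 a c b, h1 c b a, h2 b c a, h1 b a c]
  ring

/-! ### Semicontinuity of the solutions of a linear system with polynomial coefficients -/

/-- The function `g` of the parameters `t` is given by a polynomial. -/
def IsPoly {ι : Type} (g : (ι → ℂ) → ℂ) : Prop := ∃ P : MvPolynomial ι ℂ, ∀ t, g t = eval t P

namespace IsPoly
variable {ι : Type}

theorem const (c : ℂ) : IsPoly fun _ : ι → ℂ => c := ⟨C c, fun t => by simp⟩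

theorem coord (i : ι) : IsPoly fun t : ι → ℂ => t i := ⟨X i, fun t => by simp⟩

theorem mul {f g : (ι → ℂ) → ℂ} (hf : IsPoly f) (hg : IsPoly g) : IsPoly fun t => f t * g t := by
  obtain ⟨P, hP⟩ := hf
  obtain ⟨Q, hQ⟩ := hg
  exact ⟨P * Q, fun t => by simp [hP, hQ]⟩

theorem sum {κ : Type*} (s : Finset κ) {f : κ → (ι → ℂ) → ℂ} (hf : ∀ k, IsPoly (f k)) :
    IsPoly fun t => ∑ k ∈ s, f k t := by
  choose P hP using hf
  exact ⟨∑ k ∈ s, P k, fun t => by simp [hP]⟩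

theorem evalPoly {σ : Type*} {q : σ → (ι → ℂ) → ℂ} (hq : ∀ a, IsPoly (q a))
    (f : MvPolynomial σ ℂ) : IsPoly fun t => eval (fun a => q a t) f := by
  choose P hP using hq
  refine ⟨aeval P f, fun t => ?_⟩
  change eval (fun a => q a t) f = _
  induction f using MvPolynomial.induction_on with
  | C a => simp
  | add p q hp hq => simp only [map_add, hp, hq]
  | mul_X p j hp =>
    rw [map_mul, map_mul, map_mul, eval_X, aeval_X, ← hP, hp]

theorem det {κ : Type*} [Fintype κ] [DecidableEq κ] {M : (ι → ℂ) → Matrix κ κ ℂ}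
    (hM : ∀ a b, IsPoly fun t => M t a b) : IsPoly fun t => (M t).det := by
  choose P hP using hM
  refine ⟨(Matrix.of P).det, fun t => ?_⟩
  have h2 : (eval t).mapMatrix (Matrix.of P) = M t := by
    ext a b
    simp [hP]
  rw [RingHom.map_det, h2]

theorem adjugate {κ : Type*} [Fintype κ] [DecidableEq κ] {M : (ι → ℂ) → Matrix κ κ ℂ}
    (hM : ∀ a b, IsPoly fun t => M t a b) (a b : κ) : IsPoly fun t => (M t).adjugate a b := by
  choose P hP using hM
  refine ⟨(Matrix.of P).adjugate a b, fun t => ?_⟩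
  have h := RingHom.map_adjugate (eval t) (Matrix.of P)
  have h2 : (eval t).mapMatrix (Matrix.of P) = M t := by
    ext a b
    simp [hP]
  rw [h2] at h
  exact (congrFun (congrFun h a) b).symm

end IsPoly

/-- Semicontinuity. A family of linear conditions `φ j t` on `E` depends polynomially on `t`, and
at `t₀` a family `ψ` of further functionals detects every solution. Then for generic `t` the
solution space has dimension at most `card D`, and whenever equality holds it contains vectors
`G i t`, given by polynomial formulas in `t`, which span the solutions at `t₀`. -/
theorem semicont {ι : Type} {E J D : Type*} [AddCommGroup E] [Module ℂ E] [FiniteDimensional ℂ E]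
    [Fintype D] (φ : J → (ι → ℂ) → Module.Dual ℂ E) (hφ : ∀ j e, IsPoly fun t => φ j t e)
    (t₀ : ι → ℂ) (ψ : D → Module.Dual ℂ E)
    (hψ : ∀ e, (∀ j, φ j t₀ e = 0) → (∀ i, ψ i e = 0) → e = 0) :
    ∃ F : MvPolynomial ι ℂ, eval t₀ F ≠ 0 ∧ ∃ G : D → (ι → ℂ) → E,
      (∀ i (l : Module.Dual ℂ E), IsPoly fun t => l (G i t)) ∧
      (∀ e, (∀ j, φ j t₀ e = 0) → e ∈ Submodule.span ℂ (Set.range fun i => G i t₀)) ∧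
      ∀ t, eval t F ≠ 0 →
        Module.finrank ℂ (⨅ j, LinearMap.ker (φ j t) : Submodule ℂ E) ≤ Fintype.card D ∧
        (Module.finrank ℂ (⨅ j, LinearMap.ker (φ j t) : Submodule ℂ E) = Fintype.card D →
          ∀ i j, φ j t (G i t) = 0) := by
  classical
  let R : (ι → ℂ) → J ⊕ D → Module.Dual ℂ E := fun t => Sum.elim (fun j => φ j t) ψ
  have hspan : Submodule.span ℂ (Set.range (R t₀)) = ⊤ := by
    have h0 : (Submodule.span ℂ (Set.range (R t₀))).dualCoannihilator = ⊥ := by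
      rw [eq_bot_iff]
      intro e he
      rw [Submodule.mem_dualCoannihilator] at he
      exact hψ e (fun j => he _ (Submodule.subset_span ⟨Sum.inl j, rfl⟩))
        (fun i => he _ (Submodule.subset_span ⟨Sum.inr i, rfl⟩))
    rw [← Subspace.dualCoannihilator_dualAnnihilator_eq
      (W := Submodule.span ℂ (Set.range (R t₀))), h0, Submodule.dualAnnihilator_bot]
  obtain ⟨b, hb, hbs, hbi⟩ := exists_linearIndependent ℂ (Set.range (R t₀))
  rw [hspan] at hbs
  have : Finite b := hbi.finite
  have : Fintype b := Fintype.ofFinite b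
  let B : Module.Basis b ℂ (Module.Dual ℂ E) := Module.Basis.mk hbi (by simp [hbs])
  have hcard : Module.finrank ℂ E = Fintype.card b := by
    rw [← Subspace.dual_finrank_eq, Module.finrank_eq_card_basis B]
  let bE : Module.Basis b ℂ E :=
    (Module.finBasis ℂ E).reindex (Fintype.equivOfCardEq (by simp [hcard]))
  choose r hr using fun m : b => hb m.2
  have hrinj : Function.Injective r := fun m m' h => Subtype.ext (by rw [← hr m, ← hr m', h])
  let Q : (ι → ℂ) → Matrix b b ℂ := fun t => Matrix.of fun m a => R t (r m) (bE a)
  have hR : ∀ x e, IsPoly fun t => R t x e := by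
    rintro (j | i) e
    · exact hφ j e
    · exact IsPoly.const (ψ i e)
  have hQ : ∀ m a, IsPoly fun t => Q t m a := fun m a => hR _ _
  let g : b → (ι → ℂ) → E := fun m t => ∑ a, (Q t).adjugate a m • bE a
  have hRg : ∀ t m m', R t (r m) (g m' t) = if m = m' then (Q t).det else 0 := by
    intro t m m'
    have h := congrFun (congrFun (Matrix.mul_adjugate (Q t)) m) m'
    simp only [g, map_sum, map_smul, smul_eq_mul]
    rw [Matrix.mul_apply] at h
    rw [Matrix.smul_apply, Matrix.one_apply, smul_eq_mul, mul_ite, mul_one, mul_zero] at h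
    rw [← h]
    exact Finset.sum_congr rfl fun a _ => mul_comm _ _
  have hinj : ∀ t, (Q t).det ≠ 0 → ∀ e, (∀ m, R t (r m) e = 0) → e = 0 := by
    intro t ht e he
    by_contra hne
    apply ht
    rw [← Matrix.exists_mulVec_eq_zero_iff]
    refine ⟨bE.repr e, ?_, ?_⟩
    · intro h
      apply hne
      rw [← bE.sum_repr e]
      simp [h]
    · ext m
      have := he m
      rw [← bE.sum_repr e, map_sum] at this
      simp only [map_smul, smul_eq_mul] at this
      rw [Pi.zero_apply, ← this]
      exact Finset.sum_congr rfl fun a _ => mul_comm _ _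
  have hdet0 : (Q t₀).det ≠ 0 := by
    intro h
    obtain ⟨v, hv, hv0⟩ := Matrix.exists_mulVec_eq_zero_iff.2 h
    apply hv
    have h1 : ∀ m : b, (m : Module.Dual ℂ E) (∑ a, v a • bE a) = 0 := by
      intro m
      rw [← show (Q t₀).mulVec v m = 0 from congrFun hv0 m, map_sum]
      simp only [map_smul, smul_eq_mul, Matrix.mulVec, dotProduct, Q, Matrix.of_apply, hr]
      exact Finset.sum_congr rfl fun a _ => mul_comm _ _
    have h2 : ∀ l : Module.Dual ℂ E, l (∑ a, v a • bE a) = 0 := by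
      intro l
      have hl : l ∈ Submodule.span ℂ b := hbs ▸ Submodule.mem_top
      induction hl using Submodule.span_induction with
      | mem x hx => exact h1 ⟨x, hx⟩
      | zero => rfl
      | add x y _ _ hx hy => rw [LinearMap.add_apply, hx, hy, add_zero]
      | smul c x _ hx => rw [LinearMap.smul_apply, hx, smul_zero]
    have h3 := (Module.forall_dual_apply_eq_zero_iff ℂ _).1 h2
    exact funext fun a => (Fintype.linearIndependent_iff.1 bE.linearIndependent v h3 a)
  let G : D → (ι → ℂ) → E := fun i t => if h : ∃ m, r m = Sum.inr i then g h.choose t else 0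
  have hRG : ∀ t m i, R t (r m) (G i t) = if r m = Sum.inr i then (Q t).det else 0 := by
    intro t m i
    by_cases h : ∃ m, r m = Sum.inr i
    · simp only [G, dif_pos h, hRg]
      have : m = h.choose ↔ r m = Sum.inr i :=
        ⟨fun e => e ▸ h.choose_spec, fun e => hrinj (e.trans h.choose_spec.symm)⟩
      simp only [this]
    · have h' : ¬ r m = Sum.inr i := fun e => h ⟨m, e⟩
      simp only [G, dif_neg h, if_neg h', map_zero]
  have hmem : ∀ t, (Q t).det ≠ 0 → ∀ e, (∀ j, φ j t e = 0) →
      e ∈ Submodule.span ℂ (Set.range fun i => G i t) := by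
    intro t ht e he
    have h0 : (Q t).det • e - ∑ i, ψ i e • G i t = 0 := by
      refine hinj t ht _ fun m => ?_
      simp only [map_sub, map_smul, map_sum, smul_eq_mul, hRG]
      rcases hm : r m with j | i
      · simp [R, he]
      · simp [R, mul_comm, Sum.inr.injEq]
    rw [sub_eq_zero] at h0
    have h1 : e = (Q t).det⁻¹ • ∑ i, ψ i e • G i t := by
      rw [← h0, smul_smul, inv_mul_cancel₀ ht, one_smul]
    rw [h1]
    exact Submodule.smul_mem _ _ (Submodule.sum_mem _ fun i _ =>
      Submodule.smul_mem _ _ (Submodule.subset_span ⟨i, rfl⟩))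
  obtain ⟨F, hF⟩ := IsPoly.det hQ
  refine ⟨F, by rwa [← hF], G, ?_, hmem t₀ hdet0, ?_⟩
  · intro i l
    by_cases h : ∃ m, r m = Sum.inr i
    · simp only [G, dif_pos h, g, map_sum, map_smul, smul_eq_mul]
      exact IsPoly.sum _ fun a => (IsPoly.adjugate hQ _ _).mul (IsPoly.const _)
    · simp only [G, dif_neg h, map_zero]
      exact IsPoly.const 0
  · intro t ht
    rw [← hF] at ht
    have hle : (⨅ j, LinearMap.ker (φ j t) : Submodule ℂ E) ≤
        Submodule.span ℂ (Set.range fun i => G i t) := fun e he =>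
      hmem t ht e (by simpa [Submodule.mem_iInf] using he)
    have hc : Module.finrank ℂ (Submodule.span ℂ (Set.range fun i => G i t)) ≤ Fintype.card D :=
      finrank_range_le_card _
    refine ⟨(Submodule.finrank_mono hle).trans hc, fun heq i j => ?_⟩
    have h := Submodule.eq_of_le_of_finrank_le hle (hc.trans heq.ge)
    have hG : G i t ∈ (⨅ j, LinearMap.ker (φ j t) : Submodule ℂ E) :=
      h ▸ Submodule.subset_span ⟨i, rfl⟩
    rw [Submodule.mem_iInf] at hG
    exact hG j

/-- The case of `semicont` without further functionals: injectivity is an open condition. -/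
theorem semicont_inj {ι : Type} {E J : Type*} [AddCommGroup E] [Module ℂ E]
    [FiniteDimensional ℂ E] (φ : J → (ι → ℂ) → Module.Dual ℂ E)
    (hφ : ∀ j e, IsPoly fun t => φ j t e) (t₀ : ι → ℂ) (h₀ : ∀ e, (∀ j, φ j t₀ e = 0) → e = 0) :
    ∃ F : MvPolynomial ι ℂ, eval t₀ F ≠ 0 ∧
      ∀ t, eval t F ≠ 0 → ∀ e, (∀ j, φ j t e = 0) → e = 0 := by
  obtain ⟨F, hF, _, _, _, h⟩ := semicont (D := Empty) φ hφ t₀ (fun i => i.elim)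
    fun e he _ => h₀ e he
  refine ⟨F, hF, fun t ht e he => ?_⟩
  have h1 := (h t ht).1
  rw [Fintype.card_empty, Nat.le_zero, Submodule.finrank_eq_zero] at h1
  have : e ∈ (⨅ j, LinearMap.ker (φ j t) : Submodule ℂ E) := by
    simpa [Submodule.mem_iInf] using he
  rwa [h1] at this

/-! ### A Hessian criterion for isolated common singular points -/

/-- Infinitesimal criterion: if finitely many cubics are singular at `p ≠ 0` and their Hessians
at `p` have no common kernel transverse to `p`, then near `p` they are simultaneously singular
only on the line spanned by `p`. -/
theorem isolated {σ D : Type*} [Fintype σ] [Fintype D] (G : D → MvPolynomial σ ℂ)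
    (hG : ∀ i, (G i).IsHomogeneous 3) (p : σ → ℂ) (i₀ : σ) (hp : p i₀ ≠ 0)
    (hs : ∀ i c, eval p (pderiv c (G i)) = 0)
    (hess : ∀ v : σ → ℂ, (∀ i c, ∑ b, eval p (pderiv b (pderiv c (G i))) * v b = 0) →
      v i₀ = 0 → v = 0) :
    ∃ ε > 0, ∀ q : σ → ℂ, (∀ i c, eval q (pderiv c (G i)) = 0) → dist q p < ε →
      ∃ c : ℂ, q = c • p := by
  classical
  let H : (σ → ℂ) →ₗ[ℂ] (D × σ → ℂ) × ℂ :=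
    LinearMap.prod (LinearMap.pi fun x => ∑ b,
      (eval p (pderiv b (pderiv x.2 (G x.1)))) • LinearMap.proj b) (LinearMap.proj i₀)
  have H1 : ∀ v x, (H v).1 x = ∑ b, eval p (pderiv b (pderiv x.2 (G x.1))) * v b := by
    intro v x
    simp [H, LinearMap.sum_apply]
  have H2 : ∀ v, (H v).2 = v i₀ := fun v => rfl
  have hker : LinearMap.ker H = ⊥ := by
    rw [LinearMap.ker_eq_bot']
    intro v hv
    refine hess v (fun i c => ?_) ?_
    · rw [← H1 v (i, c), hv]; rfl
    · rw [← H2 v, hv]; rfl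
  obtain ⟨K, hK, hKl⟩ := LinearMap.exists_antilipschitzWith H hker
  let M : ℝ := ∑ x : D × σ, ∑ b, ∑ a, ‖T (G x.1) a b x.2‖
  have hM : 0 ≤ M := Finset.sum_nonneg fun _ _ => Finset.sum_nonneg fun _ _ =>
    Finset.sum_nonneg fun _ _ => norm_nonneg _
  have hF : ∀ (v : σ → ℂ) (x : D × σ),
      ‖∑ b, (∑ a, T (G x.1) a b x.2 * v a) * v b‖ ≤ M * ‖v‖ ^ 2 := by
    intro v x
    calc ‖∑ b, (∑ a, T (G x.1) a b x.2 * v a) * v b‖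
        ≤ ∑ b, ∑ a, ‖T (G x.1) a b x.2‖ * ‖v‖ ^ 2 := by
          refine (norm_sum_le _ _).trans (Finset.sum_le_sum fun b _ => ?_)
          rw [Finset.sum_mul]
          refine (norm_sum_le _ _).trans (Finset.sum_le_sum fun a _ => ?_)
          rw [norm_mul, norm_mul, mul_assoc, sq]
          gcongr
          · exact norm_le_pi_norm v a
          · exact norm_le_pi_norm v b
      _ = (∑ b, ∑ a, ‖T (G x.1) a b x.2‖) * ‖v‖ ^ 2 := by simp only [Finset.sum_mul]
      _ ≤ M * ‖v‖ ^ 2 := by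
          gcongr
          exact Finset.single_le_sum (f := fun x : D × σ => ∑ b, ∑ a, ‖T (G x.1) a b x.2‖)
            (fun _ _ => Finset.sum_nonneg fun _ _ => Finset.sum_nonneg fun _ _ => norm_nonneg _)
            (Finset.mem_univ x)
  let s : (σ → ℂ) → ℂ := fun q => q i₀ / p i₀
  have hcont : Continuous fun q : σ → ℂ => 2 * ‖s q‖ - K * M * ‖q - s q • p‖ := by
    simp only [s]
    fun_prop
  have hpos : 0 < 2 * ‖s p‖ - K * M * ‖p - s p • p‖ := by
    simp [s, div_self hp]
  obtain ⟨ε, hε, hball⟩ := Metric.eventually_nhds_iff.1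
    (hcont.continuousAt.eventually (lt_mem_nhds hpos))
  refine ⟨ε, hε, fun q hq hd => ⟨s q, ?_⟩⟩
  have hlt := hball hd
  by_contra hne
  set v := q - s q • p with hv
  have hv0 : v ≠ 0 := fun h => hne (sub_eq_zero.1 h)
  have hvn : 0 < ‖v‖ := norm_pos_iff.2 hv0
  have hqv : ∀ a, q a = s q * p a + v a := fun a => by simp [hv]
  have hvi : v i₀ = 0 := by simp [hv, s, div_mul_cancel₀ _ hp]
  -- the quadratic expansion of the gradient at `q = s p + v`
  have hexp : ∀ x : D × σ, 2 * s q * (H v).1 x = -∑ b, (∑ a, T (G x.1) a b x.2 * v a) * v b := by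
    rintro ⟨i, c⟩
    have e1 := eval_grad (hG i) q c
    have e2 := eval_grad (hG i) p c
    rw [hq, mul_zero] at e1
    rw [hs, mul_zero] at e2
    have e3 : ∑ b, (∑ a, T (G i) a b c * q a) * q b =
        s q ^ 2 * ∑ b, (∑ a, T (G i) a b c * p a) * p b +
        s q * ∑ b, (∑ a, T (G i) a b c * p a) * v b +
        s q * ∑ b, (∑ a, T (G i) a b c * v a) * p b +
        ∑ b, (∑ a, T (G i) a b c * v a) * v b := by
      simp only [hqv, Finset.mul_sum, ← Finset.sum_add_distrib, Finset.sum_mul]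
      refine Finset.sum_congr rfl fun b _ => Finset.sum_congr rfl fun a _ => ?_
      ring
    have e4 : ∑ b, (∑ a, T (G i) a b c * v a) * p b = ∑ b, (∑ a, T (G i) a b c * p a) * v b := by
      simp only [Finset.sum_mul]
      rw [Finset.sum_comm]
      refine Finset.sum_congr rfl fun b _ => Finset.sum_congr rfl fun a _ => ?_
      rw [T_comm₁]
      ring
    have e5 : (H v).1 (i, c) = ∑ b, (∑ a, T (G i) a b c * p a) * v b := by
      rw [H1]
      simp only [eval_hess (hG i)]
    rw [e5]
    rw [← e1, ← e2, e4] at e3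
    linear_combination -e3
  have hHn : 2 * ‖s q‖ * ‖H v‖ ≤ M * ‖v‖ ^ 2 := by
    have h1 : ‖(2 * s q) • H v‖ ≤ M * ‖v‖ ^ 2 := by
      rw [Prod.norm_def, max_le_iff]
      constructor
      · rw [pi_norm_le_iff_of_nonneg (by positivity)]
        intro x
        have : ((2 * s q) • H v).1 x = 2 * s q * (H v).1 x := rfl
        rw [this, hexp, norm_neg]
        exact hF v x
      · have : ((2 * s q) • H v).2 = 2 * s q * v i₀ := rfl
        rw [this, hvi, mul_zero, norm_zero]
        positivity
    rw [norm_smul, norm_mul] at h1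
    simpa using h1
  have hA : ‖v‖ ≤ K * ‖H v‖ := by
    have := hKl.le_mul_dist v 0
    simpa using this
  have : 2 * ‖s q‖ * ‖v‖ ≤ K * M * ‖v‖ * ‖v‖ := by
    calc 2 * ‖s q‖ * ‖v‖ ≤ 2 * ‖s q‖ * (K * ‖H v‖) := by gcongr
      _ = K * (2 * ‖s q‖ * ‖H v‖) := by ring
      _ ≤ K * (M * ‖v‖ ^ 2) := by gcongr
      _ = K * M * ‖v‖ * ‖v‖ := by ring
  have h2 := le_of_mul_le_mul_right this hvn
  linarith

/-! ### Cubics vanishing on two complementary coordinate subspaces -/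

/-- The symmetric array on coordinates `x, y, z` supported on the monomial types `xxy`, `xyy` and
`xyz`, with entries `A`, `C` and `B` respectively. These are the coefficient arrays of the cubics
vanishing on `{x = 0} ∪ {y = 0}`. -/
def arr {X Y Z : Type*} (A : X → X → Y → ℂ) (C : X → Y → Y → ℂ) (B : X → Y → Z → ℂ) :
    X ⊕ Y ⊕ Z → X ⊕ Y ⊕ Z → X ⊕ Y ⊕ Z → ℂ
  | .inl i, .inl i', .inr (.inl j) => A i i' j
  | .inl i, .inr (.inl j), .inl i' => A i i' j
  | .inr (.inl j), .inl i, .inl i' => A i i' j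
  | .inl i, .inr (.inl j), .inr (.inl j') => C i j j'
  | .inr (.inl j), .inl i, .inr (.inl j') => C i j j'
  | .inr (.inl j), .inr (.inl j'), .inl i => C i j j'
  | .inl i, .inr (.inl j), .inr (.inr r) => B i j r
  | .inl i, .inr (.inr r), .inr (.inl j) => B i j r
  | .inr (.inl j), .inl i, .inr (.inr r) => B i j r
  | .inr (.inl j), .inr (.inr r), .inl i => B i j r
  | .inr (.inr r), .inl i, .inr (.inl j) => B i j r
  | .inr (.inr r), .inr (.inl j), .inl i => B i j r
  | _, _, _ => 0

section
variable {X Y Z : Type*}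

theorem arr_comm₁ {A : X → X → Y → ℂ} {C : X → Y → Y → ℂ} {B : X → Y → Z → ℂ}
    (hA : ∀ i i' j, A i i' j = A i' i j) (hC : ∀ i j j', C i j j' = C i j' j)
    (a b c : X ⊕ Y ⊕ Z) : arr A C B a b c = arr A C B b a c := by
  rcases a with a | a | a <;> rcases b with b | b | b <;> rcases c with c | c | c <;>
    first | rfl | exact hA _ _ _ | exact hC _ _ _

theorem arr_comm₂ {A : X → X → Y → ℂ} {C : X → Y → Y → ℂ} {B : X → Y → Z → ℂ}
    (hA : ∀ i i' j, A i i' j = A i' i j) (hC : ∀ i j j', C i j j' = C i j' j)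
    (a b c : X ⊕ Y ⊕ Z) : arr A C B a b c = arr A C B a c b := by
  rcases a with a | a | a <;> rcases b with b | b | b <;> rcases c with c | c | c <;>
    first | rfl | exact hA _ _ _ | exact hC _ _ _

theorem arr_add (A A' : X → X → Y → ℂ) (C C' : X → Y → Y → ℂ) (B B' : X → Y → Z → ℂ)
    (a b c : X ⊕ Y ⊕ Z) :
    arr (A + A') (C + C') (B + B') a b c = arr A C B a b c + arr A' C' B' a b c := by
  rcases a with a | a | a <;> rcases b with b | b | b <;> rcases c with c | c | c <;>
    first | rfl | exact (add_zero 0).symm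

theorem arr_smul (k : ℂ) (A : X → X → Y → ℂ) (C : X → Y → Y → ℂ) (B : X → Y → Z → ℂ)
    (a b c : X ⊕ Y ⊕ Z) : arr (k • A) (k • C) (k • B) a b c = k * arr A C B a b c := by
  rcases a with a | a | a <;> rcases b with b | b | b <;> rcases c with c | c | c <;>
    first | rfl | exact (mul_zero k).symm

theorem ofArr_add {σ : Type*} [Fintype σ] (G H : σ → σ → σ → ℂ) :
    ofArr (fun a b c => G a b c + H a b c) = ofArr G + ofArr H := by
  simp only [ofArr, map_add, add_mul, Finset.sum_add_distrib]

theorem ofArr_smul {σ : Type*} [Fintype σ] (k : ℂ) (G : σ → σ → σ → ℂ) :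
    ofArr (fun a b c => k * G a b c) = k • ofArr G := by
  simp only [ofArr, map_mul, mul_assoc, Finset.mul_sum, smul_eq_C_mul]

theorem eval_ofArr {σ : Type*} [Fintype σ] (G : σ → σ → σ → ℂ) (v : σ → ℂ) :
    eval v (ofArr G) = ∑ a, ∑ b, ∑ c, G a b c * (v a * v b * v c) := by
  simp [ofArr]

variable [Fintype X] [Fintype Y] [Fintype Z]

theorem eval_arr_left (A : X → X → Y → ℂ) (C : X → Y → Y → ℂ) (B : X → Y → Z → ℂ)
    {v : X ⊕ Y ⊕ Z → ℂ} (hv : ∀ i, v (.inl i) = 0) : eval v (ofArr (arr A C B)) = 0 := by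
  rw [eval_ofArr]
  refine Finset.sum_eq_zero fun a _ => Finset.sum_eq_zero fun b _ => Finset.sum_eq_zero fun c _ => ?_
  rcases a with a | a | a <;> rcases b with b | b | b <;> rcases c with c | c | c <;>
    simp [hv, arr]

theorem eval_arr_right (A : X → X → Y → ℂ) (C : X → Y → Y → ℂ) (B : X → Y → Z → ℂ)
    {v : X ⊕ Y ⊕ Z → ℂ} (hv : ∀ i, v (.inr (.inl i)) = 0) : eval v (ofArr (arr A C B)) = 0 := by
  rw [eval_ofArr]
  refine Finset.sum_eq_zero fun a _ => Finset.sum_eq_zero fun b _ => Finset.sum_eq_zero fun c _ => ?_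
  rcases a with a | a | a <;> rcases b with b | b | b <;> rcases c with c | c | c <;>
    simp [hv, arr]

end

/-- The cubic with coefficient array `arr`, depending linearly on independent parameters. -/
noncomputable def arrMap (X Y Z : Type) [Fintype X] [Fintype Y] [Fintype Z] :
    (((Sym2 X × Y) ⊕ (X × Sym2 Y) ⊕ (X × Y × Z)) → ℂ) →ₗ[ℂ] MvPolynomial (X ⊕ Y ⊕ Z) ℂ where
  toFun u := ofArr (arr (fun i i' j => u (.inl (s(i, i'), j)))
    (fun i j j' => u (.inr (.inl (i, s(j, j'))))) (fun i j r => u (.inr (.inr (i, j, r)))))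
  map_add' u v := by
    rw [← ofArr_add]
    congr 1
    funext a b c
    rw [← arr_add]
    rfl
  map_smul' k u := by
    rw [RingHom.id_apply, ← ofArr_smul]
    congr 1
    funext a b c
    rw [← arr_smul]
    rfl

theorem arrMap_injective (X Y Z : Type) [Fintype X] [Fintype Y] [Fintype Z] :
    Function.Injective (arrMap X Y Z) := by
  rw [injective_iff_map_eq_zero]
  intro u hu
  have h : ∀ a b c, arr (fun i i' j => u (.inl (s(i, i'), j)))
      (fun i j j' => u (.inr (.inl (i, s(j, j'))))) (fun i j r => u (.inr (.inr (i, j, r))))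
      a b c = 0 := by
    intro a b c
    have hA : ∀ (i i' : X) (j : Y), u (.inl (s(i, i'), j)) = u (.inl (s(i', i), j)) :=
      fun i i' j => by rw [Sym2.eq_swap]
    have hC : ∀ (i : X) (j j' : Y), u (.inr (.inl (i, s(j, j')))) = u (.inr (.inl (i, s(j', j)))) :=
      fun i j j' => by rw [Sym2.eq_swap]
    have h1 := T_ofArr (arr_comm₁ (B := fun i j (r : Z) => u (.inr (.inr (i, j, r)))) hA hC)
      (arr_comm₂ hA hC) a b c
    have h2 : ofArr (arr (fun i i' j => u (.inl (s(i, i'), j)))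
      (fun i j j' => u (.inr (.inl (i, s(j, j'))))) (fun i j r => u (.inr (.inr (i, j, r))))) = 0 :=
      hu
    rw [h2] at h1
    have h3 : T (0 : MvPolynomial (X ⊕ Y ⊕ Z) ℂ) a b c = 0 := by simp [T]
    rw [h3] at h1
    simpa using h1.symm
  funext x
  rcases x with ⟨q, j⟩ | ⟨i, q⟩ | ⟨i, j, r⟩
  · induction q using Sym2.ind with
    | _ i i' => exact h (.inl i) (.inl i') (.inr (.inl j))
  · induction q using Sym2.ind with
    | _ j j' => exact h (.inl i) (.inr (.inl j)) (.inr (.inl j'))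
  · exact h (.inl i) (.inr (.inl j)) (.inr (.inr r))

/-! ### The lower bound and the singularity along the intersection -/

/-- Linear forms adapted to two subspaces `W₀`, `W₁` spanning `V`: `a` of them vanish on `W₀`, `b`
of them vanish on `W₁`, and together they form a coordinate system of `V`. -/
theorem exists_adapted {V : Type*} [AddCommGroup V] [Module ℂ V] [FiniteDimensional ℂ V]
    (W₀ W₁ : Submodule ℂ V) (hsup : W₀ ⊔ W₁ = ⊤) {a b r : ℕ}
    (h₀ : Module.finrank ℂ W₀ + a = Module.finrank ℂ V)
    (h₁ : Module.finrank ℂ W₁ + b = Module.finrank ℂ V)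
    (hr : a + b + r = Module.finrank ℂ V) :
    ∃ f : Fin a ⊕ Fin b ⊕ Fin r → Module.Dual ℂ V,
      (∀ i, f (.inl i) ∈ W₀.dualAnnihilator) ∧ (∀ i, f (.inr (.inl i)) ∈ W₁.dualAnnihilator) ∧
      Function.Surjective fun v x => f x v := by
  have e₀ : Module.finrank ℂ W₀.dualAnnihilator = a := by
    have := Subspace.finrank_add_finrank_dualAnnihilator_eq W₀
    omega
  have e₁ : Module.finrank ℂ W₁.dualAnnihilator = b := by
    have := Subspace.finrank_add_finrank_dualAnnihilator_eq W₁
    omega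
  have hdis : W₀.dualAnnihilator ⊓ W₁.dualAnnihilator = ⊥ := by
    rw [← Submodule.dualAnnihilator_sup_eq, hsup, Submodule.dualAnnihilator_top]
  obtain ⟨U, hU⟩ := Submodule.exists_isCompl (W₀.dualAnnihilator ⊔ W₁.dualAnnihilator)
  have hsum := Submodule.finrank_sup_add_finrank_inf_eq W₀.dualAnnihilator W₁.dualAnnihilator
  rw [hdis, finrank_bot, e₀, e₁] at hsum
  have e₂ : Module.finrank ℂ U = r := by
    have := Submodule.finrank_add_eq_of_isCompl hU
    rw [Subspace.dual_finrank_eq] at this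
    omega
  let b₀ := Module.finBasisOfFinrankEq ℂ _ e₀
  let b₁ := Module.finBasisOfFinrankEq ℂ _ e₁
  let b₂ := Module.finBasisOfFinrankEq ℂ _ e₂
  let f : Fin a ⊕ Fin b ⊕ Fin r → Module.Dual ℂ V :=
    Sum.elim (fun i => (b₀ i : Module.Dual ℂ V))
      (Sum.elim (fun i => (b₁ i : Module.Dual ℂ V)) (fun i => (b₂ i : Module.Dual ℂ V)))
  refine ⟨f, fun i => (b₀ i).2, fun i => (b₁ i).2, ?_⟩
  have hs : ∀ {m : ℕ} {S : Submodule ℂ (Module.Dual ℂ V)} (B : Module.Basis (Fin m) ℂ S) (v : V),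
      (∀ i, (B i : Module.Dual ℂ V) v = 0) → ∀ l ∈ S, l v = 0 := by
    intro m S B v h l hl
    have := B.sum_repr ⟨l, hl⟩
    rw [← Subtype.val_inj] at this
    simp only [Submodule.coe_sum, Submodule.coe_smul] at this
    rw [← this]
    simp [LinearMap.sum_apply, h]
  have hinj : Function.Injective (LinearMap.pi f) := by
    rw [injective_iff_map_eq_zero]
    intro v hv
    rw [← Module.forall_dual_apply_eq_zero_iff ℂ]
    intro l
    have hl : l ∈ W₀.dualAnnihilator ⊔ W₁.dualAnnihilator ⊔ U := hU.sup_eq_top ▸ Submodule.mem_top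
    obtain ⟨y, hy, z, hz, rfl⟩ := Submodule.mem_sup.1 hl
    obtain ⟨y₀, hy₀, y₁, hy₁, rfl⟩ := Submodule.mem_sup.1 hy
    rw [LinearMap.add_apply, LinearMap.add_apply,
      hs b₀ v (fun i => congrFun hv (.inl i)) y₀ hy₀,
      hs b₁ v (fun i => congrFun hv (.inr (.inl i))) y₁ hy₁,
      hs b₂ v (fun i => congrFun hv (.inr (.inr i))) z hz, add_zero, add_zero]
  have hfr : Module.finrank ℂ V = Module.finrank ℂ (Fin a ⊕ Fin b ⊕ Fin r → ℂ) := by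
    simp only [Module.finrank_fintype_fun_eq_card, Fintype.card_sum, Fintype.card_fin]
    omega
  exact (LinearMap.injective_iff_surjective_of_finrank_eq_finrank hfr).1 hinj

/-- The gradient of `f` at `p`, as a linear functional, depending linearly on `f`. -/
noncomputable def grad {σ : Type*} [Fintype σ] (p : σ → ℂ) :
    MvPolynomial σ ℂ →ₗ[ℂ] Module.Dual ℂ (σ → ℂ) :=
  ∑ i, ((aeval p).toLinearMap ∘ₗ (pderiv i).toLinearMap).smulRight (LinearMap.proj i)

theorem grad_apply {σ : Type*} [Fintype σ] (p : σ → ℂ) (f : MvPolynomial σ ℂ) (w : σ → ℂ) :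
    grad p f w = ∑ i, w i * eval p (pderiv i f) := by
  simp [grad, LinearMap.sum_apply, aeval_eq_eval, mul_comm]

theorem pderiv_of_grad {σ : Type*} [Fintype σ] {p : σ → ℂ} {f : MvPolynomial σ ℂ}
    (h : grad p f = 0) (i : σ) : eval p (pderiv i f) = 0 := by
  classical
  have := grad_apply p f (Pi.single i 1)
  rw [h] at this
  simpa [Pi.single_apply] using this.symm

variable {n : ℕ}

instance (d : ℕ) : FiniteDimensional ℂ (homogeneousSubmodule (Fin (n + 1)) ℂ d) :=
  Module.Finite.iff_fg.2 (homogeneousSubmodule_fg _ _ d)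

/-- The cubics vanishing on the union of two subspaces. -/
noncomputable def vanSpace (W₀ W₁ : Submodule ℂ (Fin (n + 1) → ℂ)) :
    Submodule ℂ (MvPolynomial (Fin (n + 1)) ℂ) :=
  SingSpace n 3 ∅ (W₀ ∪ W₁)

theorem SingSpace_le (S V : Set (Fin (n + 1) → ℂ)) (d : ℕ) :
    SingSpace n d S V ≤ homogeneousSubmodule (Fin (n + 1)) ℂ d :=
  inf_le_left.trans inf_le_left

instance (S V : Set (Fin (n + 1) → ℂ)) (d : ℕ) : FiniteDimensional ℂ (SingSpace n d S V) :=
  Submodule.finiteDimensional_of_le (SingSpace_le S V d)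

instance (W₀ W₁ : Submodule ℂ (Fin (n + 1) → ℂ)) : FiniteDimensional ℂ (vanSpace W₀ W₁) :=
  inferInstanceAs (FiniteDimensional ℂ (SingSpace n 3 ∅ (W₀ ∪ W₁)))

/-- The numbers of monomials of type `xxy`, `xyy`, `xyz` are `40`, `40` and `16 (n - 7)`. -/
theorem finrank_vanSpace (hn : 8 ≤ n) {W₀ W₁ : Submodule ℂ (Fin (n + 1) → ℂ)}
    (hsup : W₀ ⊔ W₁ = ⊤) (h₀ : Module.finrank ℂ W₀ = n - 3) (h₁ : Module.finrank ℂ W₁ = n - 3) :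
    80 + 16 * (n - 7) ≤ Module.finrank ℂ (vanSpace W₀ W₁) := by
  have hV : Module.finrank ℂ (Fin (n + 1) → ℂ) = n + 1 := by simp
  obtain ⟨f, hf₀, hf₁, hfs⟩ := exists_adapted W₀ W₁ hsup (a := 4) (b := 4) (r := n - 7)
    (by omega) (by omega) (by omega)
  let lin : Fin 4 ⊕ Fin 4 ⊕ Fin (n - 7) → MvPolynomial (Fin (n + 1)) ℂ :=
    fun x => ∑ i, C (f x (Pi.single i 1)) * X i
  have hlin : ∀ v x, eval v (lin x) = f x v := by
    intro v x
    have e : ∀ i : Fin (n + 1), (Pi.single i 1 : Fin (n + 1) → ℂ) = fun j => if i = j then 1 else 0 :=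
      fun i => funext fun j => by simp [Pi.single_apply, eq_comm]
    rw [LinearMap.pi_apply_eq_sum_univ (f x) v]
    simp [lin, mul_comm, e]
  have hev : ∀ v P, eval v (aeval lin P) = eval (fun x => f x v) P := by
    intro v P
    induction P using MvPolynomial.induction_on with
    | C a => simp
    | add p q hp hq => rw [map_add, map_add, map_add, hp, hq]
    | mul_X p j hp => rw [map_mul, map_mul, map_mul, eval_X, aeval_X, hp, hlin]
  have hinj : Function.Injective (aeval lin : MvPolynomial _ ℂ →ₐ[ℂ] _).toLinearMap := by
    rw [injective_iff_map_eq_zero]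
    intro P hP
    refine MvPolynomial.funext fun w => ?_
    obtain ⟨v, rfl⟩ := hfs w
    rw [← hev v P]
    rw [AlgHom.toLinearMap_apply] at hP
    rw [hP, map_zero, map_zero]
  let Φ := (aeval lin : MvPolynomial _ ℂ →ₐ[ℂ] _).toLinearMap ∘ₗ arrMap (Fin 4) (Fin 4) (Fin (n - 7))
  have hΦ : Function.Injective Φ := hinj.comp (arrMap_injective _ _ _)
  have hmem : ∀ u, Φ u ∈ vanSpace W₀ W₁ := by
    intro u
    rw [vanSpace, mem_SingSpace]
    refine ⟨?_, ?_, by simp⟩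
    · refine IsHomogeneous.aeval (m := 3) (n := 1) (ofArr_homog _) lin fun x => ?_
      exact IsHomogeneous.sum _ _ _ fun i _ => (isHomogeneous_C _ _).mul (isHomogeneous_X _ _)
    · rintro v (hv | hv)
      · refine (hev v _).trans (eval_arr_left _ _ _ fun i => ?_)
        exact (Submodule.mem_dualAnnihilator _).1 (hf₀ i) v hv
      · refine (hev v _).trans (eval_arr_right _ _ _ fun i => ?_)
        exact (Submodule.mem_dualAnnihilator _).1 (hf₁ i) v hv
  have hle := LinearMap.finrank_le_finrank_of_injective (f := Φ.codRestrict _ hmem)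
    (fun u v h => hΦ (congrArg Subtype.val h))
  refine le_trans ?_ hle
  rw [Module.finrank_fintype_fun_eq_card]
  simp only [Fintype.card_sum, Fintype.card_prod, Fintype.card_fin, Sym2.card]
  norm_num [Nat.choose]
  omega

/-- Linear conditions with values in `U` lower the dimension by at most `finrank U`. -/
theorem finrank_le_add {E U : Type*} [AddCommGroup E] [Module ℂ E] [AddCommGroup U] [Module ℂ U]
    (A S : Submodule ℂ E) [FiniteDimensional ℂ A] [FiniteDimensional ℂ S] [FiniteDimensional ℂ U]
    (c : A →ₗ[ℂ] U) (h : ∀ f : A, c f = 0 → (f : E) ∈ S) :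
    Module.finrank ℂ A ≤ Module.finrank ℂ U + Module.finrank ℂ S := by
  have h1 := LinearMap.finrank_range_add_finrank_ker c
  have h2 := Submodule.finrank_le (LinearMap.range c)
  have h3 : Module.finrank ℂ (LinearMap.ker c) ≤ Module.finrank ℂ S := by
    refine LinearMap.finrank_le_finrank_of_injective
      (f := LinearMap.codRestrict S (A.subtype ∘ₗ (LinearMap.ker c).subtype) fun f => h f f.2) ?_
    intro u v huv
    have h' := congrArg Subtype.val huv
    exact Subtype.ext (Subtype.ext h')
  omega

/-- Parameter count: the singularity conditions at points of the two subspaces cost only four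
each, since the gradient already annihilates the subspace. -/
theorem lower_bound (hn : 8 ≤ n) (h3 : n % 3 = 2) {W₀ W₁ : Submodule ℂ (Fin (n + 1) → ℂ)}
    (hsup : W₀ ⊔ W₁ = ⊤) (h₀ : Module.finrank ℂ W₀ = n - 3) (h₁ : Module.finrank ℂ W₁ = n - 3)
    (l m : Fin ((4 * n - 14) / 3) → Fin (n + 1) → ℂ) (hl : ∀ s, l s ∈ W₀) (hm : ∀ s, m s ∈ W₁)
    (p : Fin 5 → Fin (n + 1) → ℂ) :
    (n + 1) / 3 ≤ Module.finrank ℂ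
      (SingSpace n 3 (Set.range l ∪ Set.range m ∪ Set.range p) (W₀ ∪ W₁)) := by
  have hV : Module.finrank ℂ (Fin (n + 1) → ℂ) = n + 1 := by simp
  have hg : ∀ f : vanSpace W₀ W₁, ∀ W : Submodule ℂ (Fin (n + 1) → ℂ), (W = W₀ ∨ W = W₁) →
      ∀ q ∈ W, grad q (f : MvPolynomial _ ℂ) ∈ W.dualAnnihilator := by
    intro f W hW q hq
    rw [Submodule.mem_dualAnnihilator]
    intro w hw
    rw [grad_apply]
    refine deriv_subspace W (fun v hv => (mem_SingSpace.1 f.2).2.1 v ?_) hq hw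
    rcases hW with rfl | rfl
    · exact Or.inl hv
    · exact Or.inr hv
  let c₀ : vanSpace W₀ W₁ →ₗ[ℂ] (Fin ((4 * n - 14) / 3) → W₀.dualAnnihilator) :=
    LinearMap.pi fun s => LinearMap.codRestrict _ (grad (l s) ∘ₗ Submodule.subtype _)
      fun f => hg f W₀ (Or.inl rfl) _ (hl s)
  let c₁ : vanSpace W₀ W₁ →ₗ[ℂ] (Fin ((4 * n - 14) / 3) → W₁.dualAnnihilator) :=
    LinearMap.pi fun s => LinearMap.codRestrict _ (grad (m s) ∘ₗ Submodule.subtype _)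
      fun f => hg f W₁ (Or.inr rfl) _ (hm s)
  let c₂ : vanSpace W₀ W₁ →ₗ[ℂ] (Fin 5 → Module.Dual ℂ (Fin (n + 1) → ℂ)) :=
    LinearMap.pi fun s => grad (p s) ∘ₗ Submodule.subtype _
  have hc₀ : ∀ f s, (c₀ f s : Module.Dual ℂ (Fin (n + 1) → ℂ)) = grad (l s) f := fun f s => rfl
  have hc₁ : ∀ f s, (c₁ f s : Module.Dual ℂ (Fin (n + 1) → ℂ)) = grad (m s) f := fun f s => rfl
  have hc₂ : ∀ f s, c₂ f s = grad (p s) f := fun f s => rfl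
  clear_value c₀ c₁ c₂
  have h2 := finrank_le_add (vanSpace W₀ W₁)
    (SingSpace n 3 (Set.range l ∪ Set.range m ∪ Set.range p) (W₀ ∪ W₁)) (c₀.prod (c₁.prod c₂)) (by
      intro f hf
      have hf' : (c₀ f, c₁ f, c₂ f) = 0 := hf
      rw [Prod.mk_eq_zero, Prod.mk_eq_zero] at hf'
      obtain ⟨k₀, k₁, k₂⟩ := hf'
      have hfv := mem_SingSpace.1 f.2
      rw [mem_SingSpace]
      refine ⟨hfv.1, hfv.2.1, ?_⟩
      rintro _ ((⟨s, rfl⟩ | ⟨s, rfl⟩) | ⟨s, rfl⟩)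
      · exact pderiv_of_grad (by rw [← hc₀, k₀]; rfl)
      · exact pderiv_of_grad (by rw [← hc₁, k₁]; rfl)
      · exact pderiv_of_grad (by rw [← hc₂, k₂]; rfl))
  have e₀ := Subspace.finrank_add_finrank_dualAnnihilator_eq W₀
  have e₁ := Subspace.finrank_add_finrank_dualAnnihilator_eq W₁
  have h4 : Module.finrank ℂ W₀.dualAnnihilator = 4 := by omega
  have h5 : Module.finrank ℂ W₁.dualAnnihilator = 4 := by omega
  have h6 := finrank_vanSpace hn hsup h₀ h₁
  rw [Module.finrank_prod, Module.finrank_prod, Module.finrank_pi_fintype,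
    Module.finrank_pi_fintype, Module.finrank_pi_fintype] at h2
  simp only [h4, h5, Subspace.dual_finrank_eq, hV, Finset.sum_const, Finset.card_univ,
    Fintype.card_fin, smul_eq_mul] at h2
  omega

/-- A polynomial vanishing on two subspaces which span the whole space is singular along their
intersection. -/
theorem singular_inf {W₀ W₁ : Submodule ℂ (Fin (n + 1) → ℂ)} (hsup : W₀ ⊔ W₁ = ⊤)
    {f : MvPolynomial (Fin (n + 1)) ℂ} (hf₀ : ∀ v ∈ W₀, eval v f = 0)
    (hf₁ : ∀ v ∈ W₁, eval v f = 0) {q : Fin (n + 1) → ℂ} (hq₀ : q ∈ W₀) (hq₁ : q ∈ W₁)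
    (i : Fin (n + 1)) : eval q (pderiv i f) = 0 := by
  refine pderiv_of_grad (LinearMap.ext fun w => ?_) i
  have hw : w ∈ W₀ ⊔ W₁ := hsup ▸ Submodule.mem_top
  obtain ⟨y, hy, z, hz, rfl⟩ := Submodule.mem_sup.1 hw
  rw [map_add, grad_apply, grad_apply, deriv_subspace W₀ hf₀ hq₀ hy,
    deriv_subspace W₁ hf₁ hq₁ hz, add_zero, LinearMap.zero_apply]

/-! ### The example: configuration and linear equations -/

section bil
variable {X Y Z : Type*} [Fintype X] [Fintype Y] [Fintype Z]

/-- The symmetric trilinear form of the array `G`, contracted with `p` and `v`. -/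
def bil {σ : Type*} [Fintype σ] (G : σ → σ → σ → ℂ) (p v : σ → ℂ) (c : σ) : ℂ :=
  ∑ b, (∑ a, G a b c * p a) * v b

theorem bil_x (A : X → X → Y → ℂ) (C : X → Y → Y → ℂ) (B : X → Y → Z → ℂ)
    (hA : ∀ i i' j, A i i' j = A i' i j) (p v : X ⊕ Y ⊕ Z → ℂ) (i : X) :
    bil (arr A C B) p v (.inl i) =
      ∑ i', ∑ j, A i i' j * (p (.inl i') * v (.inr (.inl j)) + p (.inr (.inl j)) * v (.inl i')) +
      ∑ j, ∑ j', C i j j' * (p (.inr (.inl j)) * v (.inr (.inl j'))) +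
      ∑ j, ∑ r, B i j r * (p (.inr (.inl j)) * v (.inr (.inr r)) +
        p (.inr (.inr r)) * v (.inr (.inl j))) := by
  simp only [bil, Finset.sum_mul, Fintype.sum_sum_type, arr, zero_mul, Finset.sum_const_zero,
    mul_add, add_mul, Finset.sum_add_distrib, add_zero, zero_add, hA _ i]
  rw [Finset.sum_comm (f := fun x y => A i y x * p (.inl y) * v (.inr (.inl x))),
    Finset.sum_comm (f := fun x y => C i y x * p (.inr (.inl y)) * v (.inr (.inl x))),
    Finset.sum_comm (f := fun x y => B i y x * p (.inr (.inl y)) * v (.inr (.inr x)))]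
  simp only [mul_assoc]
  ring

theorem bil_y (A : X → X → Y → ℂ) (C : X → Y → Y → ℂ) (B : X → Y → Z → ℂ)
    (hC : ∀ i j j', C i j j' = C i j' j) (p v : X ⊕ Y ⊕ Z → ℂ) (j : Y) :
    bil (arr A C B) p v (.inr (.inl j)) =
      ∑ i, ∑ i', A i i' j * (p (.inl i) * v (.inl i')) +
      ∑ i, ∑ j', C i j j' * (p (.inl i) * v (.inr (.inl j')) + p (.inr (.inl j')) * v (.inl i)) +
      ∑ i, ∑ r, B i j r * (p (.inl i) * v (.inr (.inr r)) + p (.inr (.inr r)) * v (.inl i)) := by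
  simp only [bil, Finset.sum_mul, Fintype.sum_sum_type, arr, zero_mul, Finset.sum_const_zero,
    mul_add, add_mul, Finset.sum_add_distrib, add_zero, zero_add, hC _ _ j]
  rw [Finset.sum_comm (f := fun x y => A y x j * p (.inl y) * v (.inl x)),
    Finset.sum_comm (f := fun x y => C y j x * p (.inl y) * v (.inr (.inl x))),
    Finset.sum_comm (f := fun x y => B y j x * p (.inl y) * v (.inr (.inr x)))]
  simp only [mul_assoc]
  ring

theorem bil_z (A : X → X → Y → ℂ) (C : X → Y → Y → ℂ) (B : X → Y → Z → ℂ)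
    (p v : X ⊕ Y ⊕ Z → ℂ) (r : Z) :
    bil (arr A C B) p v (.inr (.inr r)) =
      ∑ i, ∑ j, B i j r * (p (.inl i) * v (.inr (.inl j)) + p (.inr (.inl j)) * v (.inl i)) := by
  simp only [bil, Finset.sum_mul, Fintype.sum_sum_type, arr, zero_mul, Finset.sum_const_zero,
    mul_add, Finset.sum_add_distrib, add_zero, zero_add]
  rw [Finset.sum_comm (f := fun x y => B y x r * p (.inl y) * v (.inr (.inl x)))]
  simp only [mul_assoc]
  ring
end bil

/-- The coordinates of the example: `x₀,…,x₃`, `y₀,…,y₃`, and `1 + 3k` coordinates `z`. -/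
abbrev Tau (k : ℕ) := Fin 4 ⊕ Fin 4 ⊕ (Unit ⊕ (Fin k × Fin 3))

/-- The `y`-coordinates of the base points on `{x = 0}`; their `z`-coordinates vanish. -/
def ly : Fin 6 → Fin 4 → ℂ :=
  ![![1, 1, 0, 0], ![1, 0, 1, 0], ![0, 1, 1, 0], ![0, 0, 1, -1], ![1, -1, 0, 0], ![0, 1, 0, -1]]
/-- The `x`-coordinates of the base points on `{y = 0}`. -/
def mx : Fin 6 → Fin 4 → ℂ :=
  ![![1, -1, 0, 0], ![0, 1, 0, 1], ![1, 0, -1, 1], ![1, 0, 0, 1], ![0, 1, 1, 1], ![0, 0, 1, 1]]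
/-- The distinguished `z`-coordinate of the base points on `{y = 0}`. -/
def mz : Fin 6 → ℂ := ![0, 1, 0, 0, 0, 0]
/-- The `x`-coordinates of the five free points. -/
def px : Fin 5 → Fin 4 → ℂ :=
  ![![1, 0, 0, 0], ![0, 1, 0, 0], ![0, 0, 1, 0], ![0, 0, 0, 1], ![1, 1, 1, 1]]
/-- The `y`-coordinates of the five free points. -/
def py : Fin 5 → Fin 4 → ℂ :=
  ![![1, 0, 0, 0], ![0, 1, 0, 0], ![0, 0, 1, 0], ![0, 0, 0, 1], ![1, 0, 1, -1]]
/-- The distinguished `z`-coordinate of the five free points. -/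
def pz : Fin 5 → ℂ := ![1, 0, 0, 0, 0]
/-- The base points on `{x = 0}` to which the four points of each block on `{x = 0}` are attached.
-/
def ls : Fin 4 → Fin 6 := ![1, 2, 0, 5]
/-- The block coordinates of the four points of each block on `{x = 0}`. -/
def lz : Fin 4 → Fin 3 → ℂ := ![![1, 1, 0], ![0, 1, 0], ![1, 0, 1], ![1, 1, 1]]
/-- The base points on `{y = 0}` to which the four points of each block on `{y = 0}` are attached.
-/
def ms : Fin 4 → Fin 6 := ![4, 3, 2, 0]
/-- The block coordinates of the four points of each block on `{y = 0}`. -/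
def mzz : Fin 4 → Fin 3 → ℂ := ![![0, 0, 1], ![1, -1, 1], ![0, 0, 1], ![0, -1, 1]]

/-- A vector of block coordinates supported in block `b`. -/
def blk {k : ℕ} (b : Fin k) (z : Fin 3 → ℂ) : Fin k × Fin 3 → ℂ :=
  fun x => if x.1 = b then z x.2 else 0

/-- The singular points on `{x = 0}`. -/
def lpt (k : ℕ) : Fin 6 ⊕ (Fin k × Fin 4) → Tau k → ℂ
  | .inl s => Sum.elim 0 (Sum.elim (ly s) (Sum.elim 0 0))
  | .inr (b, s) => Sum.elim 0 (Sum.elim (ly (ls s)) (Sum.elim 0 (blk b (lz s))))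

/-- The singular points on `{y = 0}`. -/
def mpt (k : ℕ) : Fin 6 ⊕ (Fin k × Fin 4) → Tau k → ℂ
  | .inl s => Sum.elim (mx s) (Sum.elim 0 (Sum.elim (fun _ => mz s) 0))
  | .inr (b, s) => Sum.elim (mx (ms s)) (Sum.elim 0 (Sum.elim 0 (blk b (mzz s))))

/-- The five free singular points. -/
def ppt (k : ℕ) (s : Fin 5) : Tau k → ℂ :=
  Sum.elim (px s) (Sum.elim (py s) (Sum.elim (fun _ => pz s) 0))

/-- The linear equations on the base part of the coefficient array. -/
structure BaseEq (A C : Fin 4 → Fin 4 → Fin 4 → ℂ) (B : Fin 4 → Fin 4 → ℂ) : Prop where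
  l : ∀ s i, ∑ j, ∑ j', C i j j' * (ly s j * ly s j') = 0
  m : ∀ s j, ∑ i, ∑ i', A i i' j * (mx s i * mx s i') + 2 * ∑ i, B i j * (mx s i * mz s) = 0
  px : ∀ s i, 2 * ∑ i', ∑ j, A i i' j * (px s i' * py s j) +
    ∑ j, ∑ j', C i j j' * (py s j * py s j') + 2 * ∑ j, B i j * (py s j * pz s) = 0
  py : ∀ s j, ∑ i, ∑ i', A i i' j * (CubicSing.px s i * CubicSing.px s i') +
    2 * ∑ i, ∑ j', C i j j' * (CubicSing.px s i * CubicSing.py s j') +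
    2 * ∑ i, B i j * (CubicSing.px s i * pz s) = 0
  pz : ∀ s, ∑ i, ∑ j, B i j * (CubicSing.px s i * CubicSing.py s j) = 0

/-- The linear equations on one block of the coefficient array. -/
structure BlkEq (B : Fin 4 → Fin 4 → Fin 3 → ℂ) : Prop where
  l : ∀ s i, ∑ j, ∑ r, B i j r * (ly (ls s) j * lz s r) = 0
  m : ∀ s j, ∑ i, ∑ r, B i j r * (mx (ms s) i * mzz s r) = 0
  p : ∀ s r, ∑ i, ∑ j, B i j r * (px s i * py s j) = 0

theorem mz_ms (s : Fin 4) : mz (ms s) = 0 := by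
  fin_cases s <;> simp [mz, ms]

theorem sum_blk {k : ℕ} (b : Fin k) (z : Fin 3 → ℂ) (f : Fin k × Fin 3 → ℂ) :
    ∑ x, f x * blk b z x = ∑ r, f (b, r) * z r := by
  rw [Fintype.sum_prod_type, Finset.sum_eq_single b]
  · simp [blk]
  · intro b' _ hb
    simp [blk, hb]
  · simp

/-- The conditions of singularity at the points of the example split into the base equations and the
equations of the single blocks: subtracting the equation of a base point from that of an attached
point leaves an equation in the coefficients of one block. -/
theorem sing_iff {k : ℕ} {A C : Fin 4 → Fin 4 → Fin 4 → ℂ}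
    {B : Fin 4 → Fin 4 → Unit ⊕ (Fin k × Fin 3) → ℂ}
    (hA : ∀ i i' j, A i i' j = A i' i j) (hC : ∀ i j j', C i j j' = C i j' j) :
    ((∀ s c, bil (arr A C B) (lpt k s) (lpt k s) c = 0) ∧
      (∀ s c, bil (arr A C B) (mpt k s) (mpt k s) c = 0) ∧
      (∀ s c, bil (arr A C B) (ppt k s) (ppt k s) c = 0)) ↔
    BaseEq A C (fun i j => B i j (.inl ())) ∧ ∀ b, BlkEq (fun i j r => B i j (.inr (b, r))) := by
  have two : ∀ x : ℂ, x + x = 2 * x := fun x => (two_mul x).symm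
  have sw : ∀ {κ κ' : Type} [Fintype κ] [Fintype κ'] (f : κ → κ' → ℂ) (a : κ → ℂ) (b : κ' → ℂ),
      ∑ i, ∑ j, f i j * (b j * a i) = ∑ i, ∑ j, f i j * (a i * b j) :=
    fun f a b => by simp only [mul_comm]
  -- evaluation of the gradients at each kind of point
  have hlx : ∀ s i, bil (arr A C B) (lpt k (.inl s)) (lpt k (.inl s)) (.inl i) =
      ∑ j, ∑ j', C i j j' * (ly s j * ly s j') := by
    intro s i
    rw [bil_x A C B hA]
    simp [lpt]
  have hlbx : ∀ b s i, bil (arr A C B) (lpt k (.inr (b, s))) (lpt k (.inr (b, s))) (.inl i) =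
      ∑ j, ∑ j', C i j j' * (ly (ls s) j * ly (ls s) j') +
      2 * ∑ j, ∑ r, B i j (.inr (b, r)) * (ly (ls s) j * lz s r) := by
    intro b s i
    rw [bil_x A C B hA]
    simp only [lpt, Sum.elim_inl, Sum.elim_inr, Pi.zero_apply, zero_mul, mul_zero, add_zero,
      Finset.sum_const_zero, zero_add, Fintype.sum_sum_type]
    congr 1
    rw [Finset.mul_sum]
    refine Finset.sum_congr rfl fun j _ => ?_
    have := sum_blk b (lz s) (fun x => B i j (.inr x) * (2 * ly (ls s) j))
    rw [Finset.mul_sum]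
    trans ∑ x, B i j (.inr x) * (2 * ly (ls s) j) * blk b (lz s) x
    · exact Finset.sum_congr rfl fun x _ => by ring
    · rw [this]
      exact Finset.sum_congr rfl fun x _ => by ring
  have hly : ∀ s j, bil (arr A C B) (lpt k s) (lpt k s) (.inr (.inl j)) = 0 := by
    rintro (s | s) j <;> rw [bil_y A C B hC] <;> simp [lpt]
  have hlz : ∀ s j, bil (arr A C B) (lpt k s) (lpt k s) (.inr (.inr j)) = 0 := by
    rintro (s | s) j <;> rw [bil_z A C B] <;> simp [lpt]
  have hmy : ∀ s j, bil (arr A C B) (mpt k (.inl s)) (mpt k (.inl s)) (.inr (.inl j)) =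
      ∑ i, ∑ i', A i i' j * (mx s i * mx s i') + 2 * ∑ i, B i j (.inl ()) * (mx s i * mz s) := by
    intro s j
    rw [bil_y A C B hC]
    simp [mpt, Finset.mul_sum]
    refine Finset.sum_congr rfl fun i _ => by ring
  have hmby : ∀ b s j, bil (arr A C B) (mpt k (.inr (b, s))) (mpt k (.inr (b, s)))
      (.inr (.inl j)) = ∑ i, ∑ i', A i i' j * (mx (ms s) i * mx (ms s) i') +
      2 * ∑ i, ∑ r, B i j (.inr (b, r)) * (mx (ms s) i * mzz s r) := by
    intro b s j
    rw [bil_y A C B hC]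
    simp only [mpt, Sum.elim_inl, Sum.elim_inr, Pi.zero_apply, zero_mul, mul_zero, add_zero,
      Finset.sum_const_zero, zero_add, Fintype.sum_sum_type]
    congr 1
    rw [Finset.mul_sum]
    refine Finset.sum_congr rfl fun i _ => ?_
    have := sum_blk b (mzz s) (fun x => B i j (.inr x) * (2 * mx (ms s) i))
    rw [Finset.mul_sum]
    trans ∑ x, B i j (.inr x) * (2 * mx (ms s) i) * blk b (mzz s) x
    · exact Finset.sum_congr rfl fun x _ => by ring
    · rw [this]
      exact Finset.sum_congr rfl fun x _ => by ring
  have hmx : ∀ s j, bil (arr A C B) (mpt k s) (mpt k s) (.inl j) = 0 := by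
    rintro (s | s) j <;> rw [bil_x A C B hA] <;> simp [mpt]
  have hmz : ∀ s j, bil (arr A C B) (mpt k s) (mpt k s) (.inr (.inr j)) = 0 := by
    rintro (s | s) j <;> rw [bil_z A C B] <;> simp [mpt]
  have hpx : ∀ s i, bil (arr A C B) (ppt k s) (ppt k s) (.inl i) =
      2 * ∑ i', ∑ j, A i i' j * (px s i' * py s j) +
      ∑ j, ∑ j', C i j j' * (py s j * py s j') + 2 * ∑ j, B i j (.inl ()) * (py s j * pz s) := by
    intro s i
    rw [bil_x A C B hA]
    simp [ppt, Finset.mul_sum]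
    congr 1
    · congr 1
      exact Finset.sum_congr rfl fun i' _ => Finset.sum_congr rfl fun j _ => by ring
    · exact Finset.sum_congr rfl fun j _ => by ring
  have hpy : ∀ s j, bil (arr A C B) (ppt k s) (ppt k s) (.inr (.inl j)) =
      ∑ i, ∑ i', A i i' j * (px s i * px s i') + 2 * ∑ i, ∑ j', C i j j' * (px s i * py s j') +
      2 * ∑ i, B i j (.inl ()) * (px s i * pz s) := by
    intro s j
    rw [bil_y A C B hC]
    simp [ppt, Finset.mul_sum]
    congr 1
    · congr 1
      exact Finset.sum_congr rfl fun i' _ => Finset.sum_congr rfl fun j _ => by ring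
    · exact Finset.sum_congr rfl fun j _ => by ring
  have hpz : ∀ s r, bil (arr A C B) (ppt k s) (ppt k s) (.inr (.inr r)) =
      2 * ∑ i, ∑ j, B i j r * (px s i * py s j) := by
    intro s j
    rw [bil_z A C B]
    simp [ppt, Finset.mul_sum]
    exact Finset.sum_congr rfl fun i' _ => Finset.sum_congr rfl fun j _ => by ring
  constructor
  · rintro ⟨h1, h2, h3⟩
    have l0 : ∀ s i, ∑ j, ∑ j', C i j j' * (ly s j * ly s j') = 0 := fun s i =>
      (hlx s i).symm.trans (h1 _ _)
    have m0 : ∀ s j, ∑ i, ∑ i', A i i' j * (mx s i * mx s i') +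
      2 * ∑ i, B i j (.inl ()) * (mx s i * mz s) = 0 := fun s i => (hmy s i).symm.trans (h2 _ _)
    refine ⟨⟨l0, m0, fun s i => (hpx s i).symm.trans (h3 _ _),
      fun s i => (hpy s i).symm.trans (h3 _ _), fun s => ?_⟩, fun b => ⟨fun s i => ?_,
      fun s j => ?_, fun s r => ?_⟩⟩
    · have := (hpz s (.inl ())).symm.trans (h3 _ _)
      simpa using this
    · have := (hlbx b s i).symm.trans (h1 _ _)
      rw [l0, zero_add] at this
      simpa using this
    · have := (hmby b s j).symm.trans (h2 _ _)
      have h4 := m0 (ms s) j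
      simp only [mz_ms, mul_zero, Finset.sum_const_zero, add_zero] at h4
      rw [h4, zero_add] at this
      simpa using this
    · have := (hpz s (.inr (b, r))).symm.trans (h3 _ _)
      simpa using this
  · rintro ⟨h1, h2⟩
    refine ⟨?_, ?_, ?_⟩
    · rintro (s | ⟨b, s⟩) (c | c | c)
      · rw [hlx, h1.l]
      · exact hly _ _
      · exact hlz _ _
      · rw [hlbx, h1.l, (h2 b).l]; simp
      · exact hly _ _
      · exact hlz _ _
    · rintro (s | ⟨b, s⟩) (c | c | c)
      · exact hmx _ _
      · rw [hmy, h1.m]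
      · exact hmz _ _
      · exact hmx _ _
      · have h4 := h1.m (ms s) c
        simp only [mz_ms, mul_zero, Finset.sum_const_zero, add_zero] at h4
        rw [hmby, h4, (h2 b).m]; simp
      · exact hmz _ _
    · rintro s (c | c | (c | ⟨b, c⟩))
      · rw [hpx, h1.px]
      · rw [hpy, h1.py]
      · rw [hpz, h1.pz, mul_zero]
      · rw [hpz, (h2 b).p, mul_zero]

/-! ### The example: elimination -/

/-- The base equations together with the vanishing of three coefficients have only the zero
solution. The 96 equations in 96 unknowns are put into triangular form by the relations `g_`,
each of which isolates one coefficient, and are then solved backwards. -/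
theorem base_elim {A C : Fin 4 → Fin 4 → Fin 4 → ℂ} {B : Fin 4 → Fin 4 → ℂ}
    (hA : ∀ i i' j, A i i' j = A i' i j) (hC : ∀ i j j', C i j j' = C i j' j)
    (h : BaseEq A C B) (h21 : B 2 1 = 0) (h30 : B 3 0 = 0) (h32 : B 3 2 = 0) :
    A = 0 ∧ C = 0 ∧ B = 0 := by
  have hl := h.l
  have hm := h.m
  have hp := h.px
  have hq := h.py
  have hr := h.pz
  have sA : ∀ j, A 1 0 j = A 0 1 j ∧ A 2 0 j = A 0 2 j ∧ A 3 0 j = A 0 3 j ∧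
      A 2 1 j = A 1 2 j ∧ A 3 1 j = A 1 3 j ∧ A 3 2 j = A 2 3 j :=
    fun j => ⟨hA _ _ _, hA _ _ _, hA _ _ _, hA _ _ _, hA _ _ _, hA _ _ _⟩
  have sC : ∀ j, C j 1 0 = C j 0 1 ∧ C j 2 0 = C j 0 2 ∧ C j 3 0 = C j 0 3 ∧
      C j 2 1 = C j 1 2 ∧ C j 3 1 = C j 1 3 ∧ C j 3 2 = C j 2 3 :=
    fun j => ⟨hC _ _ _, hC _ _ _, hC _ _ _, hC _ _ _, hC _ _ _, hC _ _ _⟩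
  clear hA hC h
  simp [Fin.forall_fin_succ, Fin.sum_univ_succ, ly, mx, mz, px, py, pz] at hl hm hp hq hr
  simp only [sA, sC] at hl hm hp hq
  obtain ⟨⟨l00, l01, l02, l03⟩, ⟨l10, l11, l12, l13⟩, ⟨l20, l21, l22, l23⟩, ⟨l30, l31, l32, l33⟩,
    ⟨l40, l41, l42, l43⟩, ⟨l50, l51, l52, l53⟩⟩ := hl
  obtain ⟨⟨m00, m01, m02, m03⟩, ⟨m10, m11, m12, m13⟩, ⟨m20, m21, m22, m23⟩, ⟨m30, m31, m32, m33⟩,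
    ⟨m40, m41, m42, m43⟩, ⟨m50, m51, m52, m53⟩⟩ := hm
  obtain ⟨⟨p00, p01, p02, p03⟩, ⟨p10, p11, p12, p13⟩, ⟨p20, p21, p22, p23⟩, ⟨p30, p31, p32, p33⟩,
    ⟨p40, p41, p42, p43⟩⟩ := hp
  obtain ⟨⟨q00, q01, q02, q03⟩, ⟨q10, q11, q12, q13⟩, ⟨q20, q21, q22, q23⟩, ⟨q30, q31, q32, q33⟩,
    ⟨q40, q41, q42, q43⟩⟩ := hq
  obtain ⟨r0, r1, r2, r3, r4⟩ := hr
  have g0 : B 0 0 = 0 := by linear_combination r0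
  have g1 : B 1 1 = 0 := by linear_combination r1
  have g2 : B 2 2 = 0 := by linear_combination r2
  have g3 : B 3 3 = 0 := by linear_combination r3
  have g4 : B 2 1 = 0 := by linear_combination h21
  have g5 : B 3 0 = 0 := by linear_combination h30
  have g6 : B 3 2 = 0 := by linear_combination h32
  have g7 : B 0 1 + 1 / 2 * A 0 0 1 + C 0 0 1 = 0 := by linear_combination 1 / 2 * q01
  have g8 : B 3 1 + 1 / 2 * A 1 1 1 + A 1 3 1 + 1 / 2 * A 3 3 1 = 0 := by linear_combination 1 / 2
    * m11 - g1
  have g9 : B 2 3 - B 0 2 + B 0 3 - B 1 0 - B 1 2 + B 1 3 - B 2 0 = 0 := by linear_combination -r4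
    + g0 + g2 - g3 + g5 + g6
  have g10 : B 2 0 + A 0 2 0 + 1 / 2 * C 2 0 0 = 0 := by linear_combination 1 / 2 * p02
  have g11 : B 0 2 + 1 / 2 * A 0 0 2 + C 0 0 2 = 0 := by linear_combination 1 / 2 * q02
  have g12 : B 0 3 + 1 / 2 * A 0 0 3 + C 0 0 3 = 0 := by linear_combination 1 / 2 * q03
  have g13 : B 1 2 + 1 / 2 * A 1 1 2 + A 1 3 2 + 1 / 2 * A 3 3 2 = 0 := by linear_combination 1 /
    2 * m12 - g6
  have g14 : B 1 3 + 1 / 2 * A 1 1 3 + A 1 3 3 + 1 / 2 * A 3 3 3 = 0 := by linear_combination 1 /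
    2 * m13 - g3
  have g15 : A 0 1 1 + 1 / 2 * C 0 1 1 = 0 := by linear_combination 1 / 2 * p10
  have g16 : A 1 2 1 + 1 / 2 * C 2 1 1 = 0 := by linear_combination 1 / 2 * p12
  have g17 : A 1 3 1 + 1 / 2 * C 3 1 1 = 0 := by linear_combination 1 / 2 * p13
  have g18 : C 1 1 2 + 1 / 2 * A 1 1 2 = 0 := by linear_combination 1 / 2 * q12
  have g19 : C 1 1 3 + 1 / 2 * A 1 1 3 = 0 := by linear_combination 1 / 2 * q13
  have g20 : C 2 1 2 + 1 / 2 * A 2 2 1 = 0 := by linear_combination 1 / 2 * q21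
  have g21 : C 3 1 3 + 1 / 2 * A 3 3 1 = 0 := by linear_combination 1 / 2 * q31
  have g22 : C 0 1 2 + 1 / 2 * C 0 1 1 + 1 / 2 * C 0 2 2 = 0 := by linear_combination 1 / 2 * l20
  have g23 : C 3 1 2 + 1 / 2 * C 3 1 1 + 1 / 2 * C 3 2 2 = 0 := by linear_combination 1 / 2 * l23
  have g24 : C 0 1 3 - 1 / 2 * C 0 1 1 - 1 / 2 * C 0 3 3 = 0 := by linear_combination -1 / 2 * l50
  have g25 : C 2 1 3 - 1 / 2 * C 2 1 1 - 1 / 2 * C 2 3 3 = 0 := by linear_combination -1 / 2 * l52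
  have g26 : B 1 0 + A 0 1 0 + 1 / 2 * C 1 0 0 = 0 := by linear_combination 1 / 2 * p01
  have g27 : C 1 0 1 + 1 / 2 * A 1 1 0 = 0 := by linear_combination 1 / 2 * q10
  have g28 : C 3 0 3 + 1 / 2 * A 3 3 0 = 0 := by linear_combination 1 / 2 * q30
  have g29 : A 1 1 1 + 2 * C 1 1 1 = 0 := by linear_combination q11
  have g30 : C 1 1 1 = 0 := by linear_combination -1 / 3 * p11 + 2 / 3 * g29
  have g31 : A 0 0 1 + C 0 1 1 = 0 := by linear_combination m01 + 2 * g15 - g29 + 2 * g30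
  have g32 : C 1 3 3 + A 1 1 3 = 0 := by linear_combination l51 + 2 * g19 - g30
  have g33 : C 0 3 3 + 2 * A 0 3 3 = 0 := by linear_combination p30
  have g34 : C 2 3 3 + 2 * A 2 3 3 = 0 := by linear_combination p32
  have g35 : A 0 2 2 + 1 / 2 * C 0 2 2 = 0 := by linear_combination 1 / 2 * p20
  have g36 : A 1 2 2 + 1 / 2 * C 1 2 2 = 0 := by linear_combination 1 / 2 * p21
  have g37 : C 2 0 2 + 1 / 2 * A 2 2 0 = 0 := by linear_combination 1 / 2 * q20
  have g38 : C 2 2 3 + 1 / 2 * A 2 2 3 = 0 := by linear_combination 1 / 2 * q23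
  have g39 : A 1 3 3 - 1 / 2 * A 1 1 3 = 0 := by linear_combination 1 / 2 * p31 - 1 / 2 * g32
  have g40 : C 3 2 3 + 1 / 2 * A 3 3 2 = 0 := by linear_combination 1 / 2 * q32
  have g41 : C 0 0 1 + 1 / 2 * C 0 0 0 + 1 / 2 * C 0 1 1 = 0 := by linear_combination 1 / 2 * l00
  have g42 : C 0 1 1 + C 0 0 0 = 0 := by linear_combination 1 / 2 * l40 + g41
  have g43 : C 2 0 1 + 1 / 2 * C 2 0 0 + 1 / 2 * C 2 1 1 = 0 := by linear_combination 1 / 2 * l02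
  have g44 : C 2 1 1 + C 2 0 0 = 0 := by linear_combination 1 / 2 * l42 + g43
  have g45 : C 3 0 1 + 1 / 2 * C 3 0 0 + 1 / 2 * C 3 1 1 = 0 := by linear_combination 1 / 2 * l03
  have g46 : C 3 1 1 + C 3 0 0 = 0 := by linear_combination 1 / 2 * l43 + g45
  have g47 : A 0 3 1 + 1 / 2 * A 3 3 1 + 1 / 2 * C 0 0 0 = 0 := by linear_combination 1 / 2 * m31
    - 1 / 2 * g31 + 1 / 2 * g42
  have g48 : A 0 2 1 - 1 / 2 * A 2 2 1 + A 2 3 1 = 0 := by linear_combination -1 / 2 * m21 + 1 / 2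
    * g31 - 1 / 2 * g42 + g47
  have g49 : A 2 3 1 + 1 / 2 * A 2 2 1 + 1 / 2 * A 3 3 1 = 0 := by linear_combination 1 / 2 * m51
  have g50 : A 2 2 1 - C 2 2 2 + C 2 0 0 = 0 := by linear_combination -l22 + 2 * g20 + g44
  have g51 : A 3 3 1 + C 3 3 3 - C 3 0 0 = 0 := by linear_combination l53 + 2 * g21 - g46
  have g52 : C 2 0 0 + C 3 0 0 = 0 := by linear_combination m41 - 2 * g16 - 2 * g17 - g29 + 2 *
    g30 + g44 + g46 - 2 * g49
  have g53 : C 1 0 0 - A 1 1 0 = 0 := by linear_combination l01 - 2 * g27 - g30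
  have g54 : A 1 1 0 = 0 := by linear_combination 1 / 2 * l41 + g27 - 1 / 2 * g30 - 1 / 2 * g53
  have g55 : C 1 0 2 + 1 / 2 * C 1 2 2 = 0 := by linear_combination 1 / 2 * l11 - 1 / 2 * g53 - 1
    / 2 * g54
  have g56 : A 0 1 0 - 1 / 2 * A 0 0 0 = 0 := by linear_combination -1 / 2 * m00 + 1 / 2 * g54
  have g57 : C 1 2 2 - A 1 1 2 = 0 := by linear_combination l21 - 2 * g18 - g30
  have g58 : C 0 0 0 + 2 * A 0 0 0 = 0 := by linear_combination p00 - 2 * g0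
  have g59 : A 0 0 0 = 0 := by linear_combination -1 / 3 * q00 + 2 / 3 * g0 + 2 / 3 * g58
  have g60 : C 0 0 2 + 1 / 2 * C 0 2 2 = 0 := by linear_combination 1 / 2 * l10 - 1 / 2 * g58 +
    g59
  have g61 : A 1 3 0 + 1 / 2 * A 3 3 0 = 0 := by linear_combination 1 / 2 * m10 - g5 - g26 + 1 / 2
    * g53 + g56 + 1 / 2 * g59
  have g62 : C 3 0 0 + 2 * A 0 3 0 = 0 := by linear_combination p03 - 2 * g5
  have g63 : C 3 2 2 + 2 * A 2 3 2 = 0 := by linear_combination p23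
  have g64 : C 3 3 3 + 2 * A 3 3 3 = 0 := by linear_combination p33
  have g65 : A 3 3 3 = 0 := by linear_combination -1 / 3 * q33 + 2 / 3 * g64
  have g66 : A 0 0 3 + 2 * A 0 3 3 = 0 := by linear_combination m33 - g65
  have g67 : A 2 2 3 + 2 * A 2 3 3 = 0 := by linear_combination m53 - g65
  have g68 : A 0 2 3 + 2 * A 2 3 3 = 0 := by linear_combination -1 / 2 * m23 + 1 / 2 * g65 + 1 / 2
    * g66 + 1 / 2 * g67
  have g69 : A 1 2 3 + A 1 1 3 = 0 := by linear_combination 1 / 2 * m43 - g39 - 1 / 2 * g65 - 1 /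
    2 * g67
  have g70 : C 2 2 2 - 4 * A 2 3 3 = 0 := by linear_combination l32 - g34 + 2 * g38 - g67
  have g71 : A 3 3 0 + 2 * A 0 3 0 = 0 := by linear_combination m30 - g59
  have g72 : A 2 2 2 + 8 * A 2 3 3 = 0 := by linear_combination q22 - 2 * g70
  have g73 : A 2 3 3 = 0 := by linear_combination -1 / 12 * p22 + 1 / 12 * g70 + 1 / 6 * g72
  have g74 : A 2 2 0 - 2 * A 0 3 0 = 0 := by linear_combination -l12 + 2 * g37 + g52 - g62 + g70 +
    4 * g73
  have g75 : A 2 3 0 = 0 := by linear_combination 1 / 2 * m50 - 1 / 2 * g71 - 1 / 2 * g74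
  have g76 : A 0 2 0 - A 0 3 0 = 0 := by linear_combination -1 / 2 * m20 + 1 / 2 * g59 + 1 / 2 *
    g71 + 1 / 2 * g74 - g75
  have g77 : A 1 2 0 + A 0 3 0 = 0 := by linear_combination 1 / 2 * m40 - 1 / 2 * g54 - g61 - 1 /
    2 * g74 - g75
  have g78 : A 0 1 2 - 1 / 2 * A 0 0 2 - 1 / 2 * A 1 1 2 = 0 := by linear_combination -1 / 2 * m02
  have g79 : A 0 1 3 - 1 / 2 * A 1 1 3 + A 0 3 3 = 0 := by linear_combination -1 / 2 * m03 + 1 / 2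
    * g66
  have g80 : C 3 0 2 - A 0 3 0 - A 2 3 2 = 0 := by linear_combination 1 / 2 * l13 - 1 / 2 * g62 -
    1 / 2 * g63
  have g81 : C 0 2 3 - 1 / 2 * C 0 2 2 + A 0 3 3 = 0 := by linear_combination -1 / 2 * l30 + 1 / 2
    * g33
  have g82 : C 1 2 3 + 1 / 2 * A 1 1 3 - 1 / 2 * A 1 1 2 = 0 := by linear_combination -1 / 2 * l31
    + 1 / 2 * g32 + 1 / 2 * g57
  have g83 : A 1 3 2 + A 2 3 2 + 1 / 2 * A 3 3 2 = 0 := by linear_combination 1 / 2 * m42 - g36 +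
    1 / 2 * g57 - 1 / 2 * g72 + 4 * g73
  have g84 : A 3 3 2 - 2 * A 2 3 2 = 0 := by linear_combination l33 + 2 * g40 - g63 - g64 + 2 *
    g65
  have g85 : A 2 3 2 = 0 := by linear_combination 1 / 4 * m52 - 1 / 4 * g72 + 2 * g73 - 1 / 4 *
    g84
  have g86 : A 0 0 2 + 2 * A 0 3 2 = 0 := by linear_combination m32 - g84 - 2 * g85
  have g87 : C 0 2 2 = 0 := by linear_combination m22 + 2 * g35 - g72 + 8 * g73 - g84 - g86
  have g88 : C 2 0 3 + 1 / 2 * A 1 1 2 - 2 * A 0 3 0 - A 1 1 3 = 0 := by linear_combination -1 / 2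
    * p42 + 1 / 2 * g34 + g35 + g36 + g37 - g38 + 1 / 2 * g52 - 1 / 2 * g57 - 1 / 2 * g62 - 1 / 2
    * g67 - g68 - g69 + 1 / 2 * g70 + g72 - 5 * g73 + 1 / 2 * g74 + g75 + g76 + g77 + g85 - 1 / 2
    * g87
  have g89 : C 0 0 3 + C 1 0 3 + A 0 3 0 + A 1 1 3 = 0 := by linear_combination -1 / 2 * q40 - g28
    + g37 + g52 + g53 + 3 / 2 * g54 + g55 + g56 - 1 / 2 * g57 + g58 - g59 + g60 + g61 + 1 / 2 *
    g71 + g75 + g76 + g77 + g80 + g85 - 1 / 2 * g87 - g88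
  have g90 : A 0 3 0 + 1 / 2 * A 1 1 3 = 0 := by linear_combination 1 / 4 * q43 - 1 / 2 * g28 + 1
    / 2 * g32 + 1 / 2 * g33 + 1 / 2 * g34 - 1 / 2 * g38 - 1 / 2 * g39 - 1 / 2 * g40 + 1 / 2 * g64
    - 5 / 4 * g65 - 1 / 4 * g66 - 1 / 2 * g68 - 1 / 2 * g69 + 1 / 4 * g71 - 1 / 2 * g73 - 1 / 2 *
    g79 - 1 / 2 * g81 - 1 / 2 * g82 + 1 / 4 * g84 + 1 / 2 * g85 - 1 / 4 * g87 - 1 / 2 * g88 - 1 /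
    2 * g89
  have g91 : A 0 3 2 - A 0 3 3 = 0 := by linear_combination 1 / 2 * p43 + g28 + g39 + g40 - g61 -
    1 / 2 * g62 - 1 / 2 * g63 - 1 / 2 * g64 + 2 * g65 - g71 + g73 - g75 - g80 - g83 - g84 - 2 *
    g85 + g90
  have g92 : A 0 3 3 - 1 / 2 * A 1 1 2 + 3 / 2 * A 1 1 3 = 0 := by linear_combination 1 / 2 * q41
    - g15 - g16 - g17 - g18 + g19 - g20 + g21 - g22 - g23 + g24 + g25 - g27 - 1 / 2 * g29 + g30 -
    1 / 2 * g31 + 1 / 2 * g33 + 1 / 2 * g34 - g41 + 5 / 2 * g42 - g43 + 3 / 2 * g44 - g45 + 3 / 2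
    * g46 - g47 - g48 - 1 / 2 * g50 - 1 / 2 * g51 - 1 / 2 * g52 + 1 / 2 * g54 - 3 / 2 * g58 + 3 *
    g59 - g62 + 1 / 2 * g63 + 1 / 2 * g64 - g65 - 1 / 2 * g70 - 3 * g73 - g85 + 1 / 2 * g87 + 2 *
    g90
  have g93 : A 1 1 2 + A 1 1 3 = 0 := by linear_combination q42 - 2 * g35 - 2 * g36 - 2 * g37 + 2
    * g38 + 2 * g40 - 2 * g55 - 2 * g60 - 2 * g63 - g67 - 2 * g70 - g72 + 2 * g73 + g74 - 2 * g78
    - 2 * g80 + 2 * g81 + 2 * g82 - 2 * g83 - g84 - 2 * g86 + g87 + 2 * g91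
  have g94 : A 1 1 3 - 2 / 3 * C 1 0 3 = 0 := by linear_combination -1 / 3 * p40 + 1 / 3 * g33 + 2
    / 3 * g35 + 2 / 3 * g56 + 1 / 3 * g58 + 1 / 3 * g59 + 2 / 3 * g60 - 2 / 3 * g66 - 2 / 3 * g68
    + 4 / 3 * g73 + 2 / 3 * g76 + 2 / 3 * g78 - 2 / 3 * g79 - 2 / 3 * g81 + g86 - 2 / 3 * g87 - 2
    / 3 * g89 + 2 * g90 - 4 / 3 * g91 + 1 / 3 * g93
  have g95 : C 1 0 3 = 0 := by linear_combination -1 / 4 * p41 + 1 / 4 * g32 + 1 / 2 * g36 - 1 / 2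
    * g39 + 1 / 4 * g53 + 3 / 4 * g54 + 1 / 2 * g55 + 1 / 2 * g56 - 1 / 4 * g57 + 1 / 4 * g59 + 1
    / 2 * g61 - 1 / 2 * g69 - 1 / 4 * g71 + 1 / 2 * g77 + 1 / 2 * g78 - 1 / 2 * g79 - 1 / 2 * g82
    + 1 / 2 * g83 - 1 / 4 * g84 - g85 + 1 / 4 * g86 - 1 / 2 * g91 + 1 / 4 * g93 - 3 / 4 * g94
  have e94 : A 1 1 3 = 0 := by linear_combination g94 + 2 / 3 * g95
  have e93 : A 1 1 2 = 0 := by linear_combination g93 - e94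
  have e92 : A 0 3 3 = 0 := by linear_combination g92 + 1 / 2 * e93 - 3 / 2 * e94
  have e91 : A 0 3 2 = 0 := by linear_combination g91 + e92
  have e90 : A 0 3 0 = 0 := by linear_combination g90 - 1 / 2 * e94
  have e89 : C 0 0 3 = 0 := by linear_combination g89 - g95 - e90 - e94
  have e88 : C 2 0 3 = 0 := by linear_combination g88 - 1 / 2 * e93 + 2 * e90 + e94
  have e86 : A 0 0 2 = 0 := by linear_combination g86 - 2 * e91
  have e84 : A 3 3 2 = 0 := by linear_combination g84 + 2 * g85
  have e83 : A 1 3 2 = 0 := by linear_combination g83 - g85 - 1 / 2 * e84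
  have e82 : C 1 2 3 = 0 := by linear_combination g82 - 1 / 2 * e94 + 1 / 2 * e93
  have e81 : C 0 2 3 = 0 := by linear_combination g81 + 1 / 2 * g87 - e92
  have e80 : C 3 0 2 = 0 := by linear_combination g80 + e90 + g85
  have e79 : A 0 1 3 = 0 := by linear_combination g79 + 1 / 2 * e94 - e92
  have e78 : A 0 1 2 = 0 := by linear_combination g78 + 1 / 2 * e86 + 1 / 2 * e93
  have e77 : A 1 2 0 = 0 := by linear_combination g77 - e90
  have e76 : A 0 2 0 = 0 := by linear_combination g76 + e90
  have e74 : A 2 2 0 = 0 := by linear_combination g74 + 2 * e90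
  have e72 : A 2 2 2 = 0 := by linear_combination g72 - 8 * g73
  have e71 : A 3 3 0 = 0 := by linear_combination g71 - 2 * e90
  have e70 : C 2 2 2 = 0 := by linear_combination g70 + 4 * g73
  have e69 : A 1 2 3 = 0 := by linear_combination g69 - e94
  have e68 : A 0 2 3 = 0 := by linear_combination g68 - 2 * g73
  have e67 : A 2 2 3 = 0 := by linear_combination g67 - 2 * g73
  have e66 : A 0 0 3 = 0 := by linear_combination g66 - 2 * e92
  have e64 : C 3 3 3 = 0 := by linear_combination g64 - 2 * g65
  have e63 : C 3 2 2 = 0 := by linear_combination g63 - 2 * g85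
  have e62 : C 3 0 0 = 0 := by linear_combination g62 - 2 * e90
  have e61 : A 1 3 0 = 0 := by linear_combination g61 - 1 / 2 * e71
  have e60 : C 0 0 2 = 0 := by linear_combination g60 - 1 / 2 * g87
  have e58 : C 0 0 0 = 0 := by linear_combination g58 - 2 * g59
  have e57 : C 1 2 2 = 0 := by linear_combination g57 + e93
  have e56 : A 0 1 0 = 0 := by linear_combination g56 + 1 / 2 * g59
  have e55 : C 1 0 2 = 0 := by linear_combination g55 - 1 / 2 * e57
  have e53 : C 1 0 0 = 0 := by linear_combination g53 + g54
  have e52 : C 2 0 0 = 0 := by linear_combination g52 - e62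
  have e51 : A 3 3 1 = 0 := by linear_combination g51 - e64 + e62
  have e50 : A 2 2 1 = 0 := by linear_combination g50 + e70 - e52
  have e49 : A 2 3 1 = 0 := by linear_combination g49 - 1 / 2 * e50 - 1 / 2 * e51
  have e48 : A 0 2 1 = 0 := by linear_combination g48 + 1 / 2 * e50 - e49
  have e47 : A 0 3 1 = 0 := by linear_combination g47 - 1 / 2 * e51 - 1 / 2 * e58
  have e46 : C 3 1 1 = 0 := by linear_combination g46 - e62
  have e45 : C 3 0 1 = 0 := by linear_combination g45 - 1 / 2 * e62 - 1 / 2 * e46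
  have e44 : C 2 1 1 = 0 := by linear_combination g44 - e52
  have e43 : C 2 0 1 = 0 := by linear_combination g43 - 1 / 2 * e52 - 1 / 2 * e44
  have e42 : C 0 1 1 = 0 := by linear_combination g42 - e58
  have e41 : C 0 0 1 = 0 := by linear_combination g41 - 1 / 2 * e58 - 1 / 2 * e42
  have e40 : C 3 2 3 = 0 := by linear_combination g40 - 1 / 2 * e84
  have e39 : A 1 3 3 = 0 := by linear_combination g39 + 1 / 2 * e94
  have e38 : C 2 2 3 = 0 := by linear_combination g38 - 1 / 2 * e67
  have e37 : C 2 0 2 = 0 := by linear_combination g37 - 1 / 2 * e74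
  have e36 : A 1 2 2 = 0 := by linear_combination g36 - 1 / 2 * e57
  have e35 : A 0 2 2 = 0 := by linear_combination g35 - 1 / 2 * g87
  have e34 : C 2 3 3 = 0 := by linear_combination g34 - 2 * g73
  have e33 : C 0 3 3 = 0 := by linear_combination g33 - 2 * e92
  have e32 : C 1 3 3 = 0 := by linear_combination g32 - e94
  have e31 : A 0 0 1 = 0 := by linear_combination g31 - e42
  have e29 : A 1 1 1 = 0 := by linear_combination g29 - 2 * g30
  have e28 : C 3 0 3 = 0 := by linear_combination g28 - 1 / 2 * e71
  have e27 : C 1 0 1 = 0 := by linear_combination g27 - 1 / 2 * g54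
  have e26 : B 1 0 = 0 := by linear_combination g26 - e56 - 1 / 2 * e53
  have e25 : C 2 1 3 = 0 := by linear_combination g25 + 1 / 2 * e44 + 1 / 2 * e34
  have e24 : C 0 1 3 = 0 := by linear_combination g24 + 1 / 2 * e42 + 1 / 2 * e33
  have e23 : C 3 1 2 = 0 := by linear_combination g23 - 1 / 2 * e46 - 1 / 2 * e63
  have e22 : C 0 1 2 = 0 := by linear_combination g22 - 1 / 2 * e42 - 1 / 2 * g87
  have e21 : C 3 1 3 = 0 := by linear_combination g21 - 1 / 2 * e51
  have e20 : C 2 1 2 = 0 := by linear_combination g20 - 1 / 2 * e50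
  have e19 : C 1 1 3 = 0 := by linear_combination g19 - 1 / 2 * e94
  have e18 : C 1 1 2 = 0 := by linear_combination g18 - 1 / 2 * e93
  have e17 : A 1 3 1 = 0 := by linear_combination g17 - 1 / 2 * e46
  have e16 : A 1 2 1 = 0 := by linear_combination g16 - 1 / 2 * e44
  have e15 : A 0 1 1 = 0 := by linear_combination g15 - 1 / 2 * e42
  have e14 : B 1 3 = 0 := by linear_combination g14 - 1 / 2 * e94 - e39 - 1 / 2 * g65
  have e13 : B 1 2 = 0 := by linear_combination g13 - 1 / 2 * e93 - e83 - 1 / 2 * e84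
  have e12 : B 0 3 = 0 := by linear_combination g12 - 1 / 2 * e66 - e89
  have e11 : B 0 2 = 0 := by linear_combination g11 - 1 / 2 * e86 - e60
  have e10 : B 2 0 = 0 := by linear_combination g10 - e76 - 1 / 2 * e52
  have e9 : B 2 3 = 0 := by linear_combination g9 + e11 - e12 + e26 + e13 - e14 + e10
  have e8 : B 3 1 = 0 := by linear_combination g8 - 1 / 2 * e29 - e17 - 1 / 2 * e51
  have e7 : B 0 1 = 0 := by linear_combination g7 - 1 / 2 * e31 - e41
  have : (∀ i i' j, A i i' j = 0) ∧ (∀ i i' j, C i i' j = 0) ∧ (∀ i j, B i j = 0) := by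
    simp [Fin.forall_fin_succ, sA, sC, g59, e31, e86, e66, e56, e15, e78, e79, e76, e48, e35, e68,
      e90, e47, e91, e92, g54, e29, e93, e94, e77, e16, e36, e69, e61, e17, e83, e39, e74, e50,
      e72, e67, g75, e49, g85, g73, e71, e51, e84, g65, g0, e7, e11, e12, e26, g1, e13, e14, e10,
      g4, g2, e9, g5, e8, g6, g3, e58, e41, e60, e89, e42, e22, e24, g87, e81, e33, e53, e27, e55,
      g95, g30, e18, e19, e57, e82, e32, e52, e43, e37, e88, e44, e20, e25, e70, e38, e34, e62,
      e45, e80, e28, e46, e23, e21, e63, e40, e64]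
  exact ⟨funext fun i => funext fun j => funext fun r => this.1 i j r,
    funext fun i => funext fun j => funext fun r => this.2.1 i j r,
    funext fun i => funext fun j => this.2.2 i j⟩

/-- The solutions of the equations of one block are determined by a single coefficient. -/
theorem blk_elim {B : Fin 4 → Fin 4 → Fin 3 → ℂ} (h : BlkEq B) (h0 : B 3 2 2 = 0) : B = 0 := by
  have hl := h.l
  have hm := h.m
  have hp := h.p
  simp [Fin.forall_fin_succ, Fin.sum_univ_succ, ly, ls, lz, mx, ms, mzz, px, py] at hl hm hp
  have : ∀ i j r, B i j r = 0 := by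
    simp [Fin.forall_fin_succ]
    grind
  exact funext fun i => funext fun j => funext fun r => this i j r

/-! ### The example: determination of the cubics -/

/-- `f` is a cubic that vanishes on `{x = 0} ∪ {y = 0}` and is singular at the points of the
example. -/
structure Config (k : ℕ) (f : MvPolynomial (Tau k) ℂ) : Prop where
  homog : f.IsHomogeneous 3
  vx : ∀ v : Tau k → ℂ, (∀ i, v (.inl i) = 0) → eval v f = 0
  vy : ∀ v : Tau k → ℂ, (∀ i, v (.inr (.inl i)) = 0) → eval v f = 0
  l : ∀ s c, eval (lpt k s) (pderiv c f) = 0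
  m : ∀ s c, eval (mpt k s) (pderiv c f) = 0
  p : ∀ s c, eval (ppt k s) (pderiv c f) = 0

theorem eq_arr {X Y Z : Type*} {G : X ⊕ Y ⊕ Z → X ⊕ Y ⊕ Z → X ⊕ Y ⊕ Z → ℂ}
    (h₁ : ∀ a b c, G a b c = G b a c) (h₂ : ∀ a b c, G a b c = G a c b)
    (hyz : ∀ a b c, G (.inr a) (.inr b) (.inr c) = 0)
    (hxxx : ∀ a b c, G (.inl a) (.inl b) (.inl c) = 0)
    (hxxz : ∀ a b c, G (.inl a) (.inl b) (.inr (.inr c)) = 0)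
    (hxzz : ∀ a b c, G (.inl a) (.inr (.inr b)) (.inr (.inr c)) = 0) :
    G = arr (fun i i' j => G (.inl i) (.inl i') (.inr (.inl j)))
      (fun i j j' => G (.inl i) (.inr (.inl j)) (.inr (.inl j')))
      (fun i j r => G (.inl i) (.inr (.inl j)) (.inr (.inr r))) := by
  have h₃ : ∀ a b c, G a b c = G c b a := fun a b c => by rw [h₁, h₂, h₁]
  have h₄ : ∀ a b c, G a b c = G b c a := fun a b c => by rw [h₁, h₂]
  have h₅ : ∀ a b c, G a b c = G c a b := fun a b c => by rw [h₂, h₁]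
  funext a b c
  rcases a with a | a | a <;> rcases b with b | b | b <;> rcases c with c | c | c <;>
    simp only [arr, hyz, hxxx, hxxz, hxzz] <;>
    first
    | exact h₁ _ _ _
    | exact h₂ _ _ _
    | exact h₃ _ _ _
    | exact h₄ _ _ _
    | exact h₅ _ _ _
    | (rw [h₁]; simp only [hxzz])
    | (rw [h₂]; simp only [hxxz])
    | (rw [h₃]; simp only [hxxz, hxzz])

/-- The monomials occurring in a cubic that vanishes on `{x = 0} ∪ {y = 0}` are of type `xxy`, `xyy`
and `xyz`. -/
theorem T_eq_arr {k : ℕ} {f : MvPolynomial (Tau k) ℂ}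
    (hx : ∀ v : Tau k → ℂ, (∀ i, v (.inl i) = 0) → eval v f = 0)
    (hy : ∀ v : Tau k → ℂ, (∀ i, v (.inr (.inl i)) = 0) → eval v f = 0) :
    T f = arr (fun i i' j => T f (.inl i) (.inl i') (.inr (.inl j)))
      (fun i j j' => T f (.inl i) (.inr (.inl j)) (.inr (.inl j')))
      (fun i j r => T f (.inl i) (.inr (.inl j)) (.inr (.inr r))) := by
  classical
  obtain ⟨Wx, mWx⟩ : ∃ W : Submodule ℂ (Tau k → ℂ), ∀ v, v ∈ W ↔ ∀ i, v (.inl i) = 0 :=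
    ⟨⨅ i, LinearMap.ker (LinearMap.proj (.inl i)), fun v => by simp [Submodule.mem_iInf]⟩
  obtain ⟨Wy, mWy⟩ : ∃ W : Submodule ℂ (Tau k → ℂ), ∀ v, v ∈ W ↔ ∀ i, v (.inr (.inl i)) = 0 :=
    ⟨⨅ i, LinearMap.ker (LinearMap.proj (.inr (.inl i))), fun v => by simp [Submodule.mem_iInf]⟩
  have hx' : ∀ v ∈ Wx, eval v f = 0 := fun v hv => hx v ((mWx v).1 hv)
  have hy' : ∀ v ∈ Wy, eval v f = 0 := fun v hv => hy v ((mWy v).1 hv)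
  have zx : ∀ a : Fin 4, (Pi.single (.inl a) 1 : Tau k → ℂ) ∈ Wy := fun a => by simp [mWy]
  have zyz : ∀ a, (Pi.single (.inr a) 1 : Tau k → ℂ) ∈ Wx := fun a => by simp [mWx]
  have zz : ∀ a, (Pi.single (.inr (.inr a)) 1 : Tau k → ℂ) ∈ Wy := fun a => by simp [mWy]
  exact eq_arr (T_comm₁ f) (T_comm₂ f)
    (fun a b c => T_vanish Wx hx' (zyz a) (zyz b) (zyz c))
    (fun a b c => T_vanish Wy hy' (zx a) (zx b) (zx c))
    (fun a b c => T_vanish Wy hy' (zx a) (zx b) (zz c))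
    (fun a b c => T_vanish Wy hy' (zx a) (zz b) (zz c))

/-- The cubics of the example are determined by `3 + k` of their coefficients. -/
theorem config_elim {k : ℕ} {f : MvPolynomial (Tau k) ℂ} (hf : Config k f)
    (h21 : T f (.inl 2) (.inr (.inl 1)) (.inr (.inr (.inl ()))) = 0)
    (h30 : T f (.inl 3) (.inr (.inl 0)) (.inr (.inr (.inl ()))) = 0)
    (h32 : T f (.inl 3) (.inr (.inl 2)) (.inr (.inr (.inl ()))) = 0)
    (hb : ∀ b, T f (.inl 3) (.inr (.inl 2)) (.inr (.inr (.inr (b, 2)))) = 0) : f = 0 := by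
  refine eq_zero_of_T hf.homog fun a b c => ?_
  have hT := T_eq_arr hf.vx hf.vy
  have g : ∀ v c, bil (T f) v v c = 2 * eval v (pderiv c f) := fun v c =>
    (eval_grad hf.homog v c).symm
  rw [hT] at g
  obtain ⟨h1, h2⟩ := (sing_iff (k := k) (fun i i' j => T_comm₁ f (.inl i) (.inl i') (.inr (.inl j)))
    (fun i j j' => T_comm₂ f (.inl i) (.inr (.inl j)) (.inr (.inl j')))).1
    ⟨fun s c => by rw [g, hf.l, mul_zero], fun s c => by rw [g, hf.m, mul_zero],
      fun s c => by rw [g, hf.p, mul_zero]⟩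
  obtain ⟨e1, e2, e3⟩ := base_elim
    (fun i i' j => T_comm₁ f (.inl i) (.inl i') (.inr (.inl j)))
    (fun i j j' => T_comm₂ f (.inl i) (.inr (.inl j)) (.inr (.inl j'))) h1 h21 h30 h32
  have e4 : (fun (i j : Fin 4) (r : Unit ⊕ Fin k × Fin 3) =>
      T f (.inl i) (.inr (.inl j)) (.inr (.inr r))) = 0 := by
    funext i j r
    rcases r with r | ⟨b, r⟩
    · exact congrFun (congrFun e3 i) j
    · exact congrFun (congrFun (congrFun (blk_elim (h2 b) (hb b)) i) j) r
  rw [hT, e1, e2, e4]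
  rcases a with a | a | a <;> rcases b with b | b | b <;> rcases c with c | c | c <;> rfl

/-- The Hessian of the cubic with coefficient array `arr A C B`, contracted with a vector. -/
theorem hess_arr {k : ℕ} {A C : Fin 4 → Fin 4 → Fin 4 → ℂ}
    {B : Fin 4 → Fin 4 → Unit ⊕ (Fin k × Fin 3) → ℂ}
    (hA : ∀ i i' j, A i i' j = A i' i j) (hC : ∀ i j j', C i j j' = C i j' j)
    (p v : Tau k → ℂ) (c : Tau k) :
    ∑ b, eval p (pderiv b (pderiv c (ofArr (arr A C B)))) * v b = 6 * bil (arr A C B) p v c := by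
  simp only [eval_hess (ofArr_homog _), T_ofArr (arr_comm₁ hA hC) (arr_comm₂ hA hC), bil,
    Finset.mul_sum, Finset.sum_mul, mul_assoc]

/-- Solutions of the base equations and of the block equations give cubics of the example. -/
theorem config_of_eq {k : ℕ} {A C : Fin 4 → Fin 4 → Fin 4 → ℂ}
    {B : Fin 4 → Fin 4 → Unit ⊕ (Fin k × Fin 3) → ℂ}
    (hA : ∀ i i' j, A i i' j = A i' i j) (hC : ∀ i j j', C i j j' = C i j' j)
    (h1 : BaseEq A C (fun i j => B i j (.inl ())))
    (h2 : ∀ b, BlkEq (fun i j r => B i j (.inr (b, r)))) : Config k (ofArr (arr A C B)) := by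
  have g : ∀ v c, bil (arr A C B) v v c = 0 → eval v (pderiv c (ofArr (arr A C B))) = 0 := by
    intro v c h
    have h3 := eval_grad (ofArr_homog (arr A C B)) v c
    simp only [T_ofArr (arr_comm₁ hA hC) (arr_comm₂ hA hC)] at h3
    have h4 : ∑ b, (∑ a, 6 * arr A C B a b c * v a) * v b = 6 * bil (arr A C B) v v c := by
      simp only [bil, Finset.mul_sum, Finset.sum_mul, mul_assoc]
    rw [h4, h, mul_zero] at h3
    simpa using h3
  obtain ⟨g1, g2, g3⟩ := (sing_iff hA hC).2 ⟨h1, h2⟩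
  exact ⟨ofArr_homog _, fun v hv => eval_arr_left _ _ _ hv, fun v hv => eval_arr_right _ _ _ hv,
    fun s c => g _ _ (g1 s c), fun s c => g _ _ (g2 s c), fun s c => g _ _ (g3 s c)⟩

/-! ### The example: Hessians at the free points -/

/-- The `xxy`-coefficients of a cubic of the example. -/
noncomputable def cA : Fin 4 → Fin 4 → Fin 4 → ℂ :=
  ![![![0, 0, -4, -2], ![0, 0, -1, -1], ![1, 0, 0, 0], ![-1, 0, 2, 1]],
    ![![0, 0, -1, -1], ![0, 0, 2, 0], ![2, 0, -1, 0], ![-2, 0, 0, 0]],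
    ![![1, 0, 0, 0], ![2, 0, -1, 0], ![0, 0, 0, 0], ![-1, 0, 0, 0]],
    ![![-1, 0, 2, 1], ![-2, 0, 0, 0], ![-1, 0, 0, 0], ![2, 0, 0, 0]]]
/-- The `xyy`-coefficients of the same cubic. -/
noncomputable def cC : Fin 4 → Fin 4 → Fin 4 → ℂ :=
  ![![![0, 0, 0, -1], ![0, 0, 0, -1], ![0, 0, 0, -1], ![-1, -1, -1, -2]],
    ![![0, 0, -1, 0], ![0, 0, -1, 0], ![-1, -1, 2, 1], ![0, 0, 1, 0]],
    ![![0, 0, 0, 1], ![0, 0, 0, 0], ![0, 0, 0, 0], ![1, 0, 0, 0]],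
    ![![0, 0, 0, -1], ![0, 0, 0, 0], ![0, 0, 0, 0], ![-1, 0, 0, 0]]]
/-- The coefficients of the same cubic at the monomials `x y z` with the distinguished `z`. -/
noncomputable def cB : Fin 4 → Fin 4 → ℂ :=
  ![![0, 0, 2, 2], ![0, 0, -1, 0], ![-1, 0, 0, -1], ![1, 0, 0, 0]]
/-- The cubic `x₂ y₁ z` of the example, with the distinguished `z`. -/
noncomputable def cB₁ : Fin 4 → Fin 4 → ℂ :=
  ![![0, 0, 0, 0], ![0, 0, 0, 0], ![0, 1, 0, 0], ![0, 0, 0, 0]]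
/-- The cubic `(x₃ - x₁) y₂ z` of the example, with the distinguished `z`. -/
noncomputable def cB₃ : Fin 4 → Fin 4 → ℂ :=
  ![![0, 0, 0, 0], ![0, 0, -1, 0], ![0, 0, 0, 0], ![0, 0, 1, 0]]
/-- The `xyz`-coefficients of the cubic of the example that belongs to a block. -/
noncomputable def cD : Fin 4 → Fin 4 → Fin 3 → ℂ :=
  ![![![0, 0, 0], ![0, 0, 0], ![0, 0, -1], ![1, 0, -1]],
    ![![0, 0, 0], ![0, 0, 0], ![0, 0, -1], ![-3, 2, 1]],
    ![![1, -1, 0], ![-1, 0, 0], ![0, 0, 0], ![3, -3, -1]],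
    ![![0, 0, 0], ![0, 0, 0], ![0, 0, 1], ![0, 0, 0]]]

theorem cA_symm (i i' j : Fin 4) : cA i i' j = cA i' i j := by
  fin_cases i <;> fin_cases i' <;> fin_cases j <;> rfl
theorem cC_symm (i j j' : Fin 4) : cC i j j' = cC i j' j := by
  fin_cases i <;> fin_cases j <;> fin_cases j' <;> rfl

/-- The coefficients `cA`, `cC`, `cB` define a cubic of the example. -/
theorem base_eq : BaseEq cA cC cB := by
  constructor <;>
    norm_num [Fin.forall_fin_succ, Fin.sum_univ_succ, ly, mx, mz, px, py, pz, cA, cC, cB]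

theorem base_eq₁ : BaseEq 0 0 cB₁ := by
  constructor <;>
    norm_num [Fin.forall_fin_succ, Fin.sum_univ_succ, ly, mx, mz, px, py, pz, cB₁]

theorem base_eq₃ : BaseEq 0 0 cB₃ := by
  constructor <;>
    norm_num [Fin.forall_fin_succ, Fin.sum_univ_succ, ly, mx, mz, px, py, pz, cB₃]

theorem blk_eq : BlkEq cD := by
  constructor
  · intro s i
    fin_cases s <;> fin_cases i <;>
      simp [Fin.sum_univ_succ, ly, ls, lz, cD] <;> norm_num
  · intro s i
    fin_cases s <;> fin_cases i <;>
      simp [Fin.sum_univ_succ, mx, ms, mzz, cD] <;> norm_num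
  · intro s i
    fin_cases s <;> fin_cases i <;>
      simp [Fin.sum_univ_succ, px, py, cD] <;> norm_num

theorem base_zero : BaseEq 0 0 0 := by constructor <;> simp
theorem blk_zero : BlkEq 0 := by constructor <;> simp

/-- The index of a nonzero coordinate of each of the five points. -/
def ik : Fin 5 → Fin 4 := ![0, 1, 2, 3, 0]

/-- The equations saying that `(x, y, z)` lies in the kernel of the Hessian, at the `s`-th free
point, of the base part of the cubic with coefficient arrays `A`, `C`, `B`. -/
structure HessEq (A C : Fin 4 → Fin 4 → Fin 4 → ℂ) (B : Fin 4 → Fin 4 → ℂ) (s : Fin 5)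
    (x y : Fin 4 → ℂ) (z : ℂ) : Prop where
  dx : ∀ i, ∑ i', ∑ j, A i i' j * (px s i' * y j + py s j * x i') +
    ∑ j, ∑ j', C i j j' * (py s j * y j') + ∑ j, B i j * (py s j * z + pz s * y j) = 0
  dy : ∀ j, ∑ i, ∑ i', A i i' j * (px s i * x i') +
    ∑ i, ∑ j', C i j j' * (px s i * y j' + py s j' * x i) +
    ∑ i, B i j * (px s i * z + pz s * x i) = 0
  dz : ∑ i, ∑ j, B i j * (px s i * y j + py s j * x i) = 0

theorem hess_elim_0 {x y : Fin 4 → ℂ} {z : ℂ} (h1 : HessEq 0 0 cB₁ 0 x y z)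
    (h2 : HessEq cA cC cB 0 x y z) (h3 : HessEq 0 0 cB₃ 0 x y z) (h0 : x (ik 0) = 0) :
    (∀ i, x i = 0) ∧ (∀ i, y i = 0) ∧ z = 0 := by
  obtain ⟨a1, a2, a3⟩ := h1
  obtain ⟨b1, b2, b3⟩ := h2
  obtain ⟨c1, c2, c3⟩ := h3
  simp only [Fin.forall_fin_succ, Fin.sum_univ_succ] at a1 a2 a3 b1 b2 b3 c1 c2 c3 ⊢
  simp [px, py, pz, cB₁, cB₃, ik] at a1 a2 a3 c1 c2 c3 h0 ⊢
  simp [px, py, pz, cA, cB, cC] at b1 b2 b3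
  grind

theorem hess_elim_1 {x y : Fin 4 → ℂ} {z : ℂ} (h1 : HessEq 0 0 cB₁ 1 x y z)
    (h2 : HessEq cA cC cB 1 x y z) (h3 : HessEq 0 0 cB₃ 1 x y z) (h0 : x (ik 1) = 0) :
    (∀ i, x i = 0) ∧ (∀ i, y i = 0) ∧ z = 0 := by
  obtain ⟨a1, a2, a3⟩ := h1
  obtain ⟨b1, b2, b3⟩ := h2
  obtain ⟨c1, c2, c3⟩ := h3
  simp only [Fin.forall_fin_succ, Fin.sum_univ_succ] at a1 a2 a3 b1 b2 b3 c1 c2 c3 ⊢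
  simp [px, py, pz, cB₁, cB₃, ik] at a1 a2 a3 c1 c2 c3 h0 ⊢
  simp [px, py, pz, cA, cB, cC] at b1 b2 b3
  grind

theorem hess_elim_2 {x y : Fin 4 → ℂ} {z : ℂ} (h1 : HessEq 0 0 cB₁ 2 x y z)
    (h2 : HessEq cA cC cB 2 x y z) (h3 : HessEq 0 0 cB₃ 2 x y z) (h0 : x (ik 2) = 0) :
    (∀ i, x i = 0) ∧ (∀ i, y i = 0) ∧ z = 0 := by
  obtain ⟨a1, a2, a3⟩ := h1
  obtain ⟨b1, b2, b3⟩ := h2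
  obtain ⟨c1, c2, c3⟩ := h3
  simp only [Fin.forall_fin_succ, Fin.sum_univ_succ] at a1 a2 a3 b1 b2 b3 c1 c2 c3 ⊢
  simp [px, py, pz, cB₁, cB₃, ik] at a1 a2 a3 c1 c2 c3 h0 ⊢
  simp [px, py, pz, cA, cB, cC] at b1 b2 b3
  grind

theorem hess_elim_3 {x y : Fin 4 → ℂ} {z : ℂ} (h1 : HessEq 0 0 cB₁ 3 x y z)
    (h2 : HessEq cA cC cB 3 x y z) (h3 : HessEq 0 0 cB₃ 3 x y z) (h0 : x (ik 3) = 0) :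
    (∀ i, x i = 0) ∧ (∀ i, y i = 0) ∧ z = 0 := by
  obtain ⟨a1, a2, a3⟩ := h1
  obtain ⟨b1, b2, b3⟩ := h2
  obtain ⟨c1, c2, c3⟩ := h3
  simp only [Fin.forall_fin_succ, Fin.sum_univ_succ] at a1 a2 a3 b1 b2 b3 c1 c2 c3 ⊢
  simp [px, py, pz, cB₁, cB₃, ik] at a1 a2 a3 c1 c2 c3 h0 ⊢
  simp [px, py, pz, cA, cB, cC] at b1 b2 b3
  grind

theorem hess_elim_4 {x y : Fin 4 → ℂ} {z : ℂ} (h1 : HessEq 0 0 cB₁ 4 x y z)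
    (h2 : HessEq cA cC cB 4 x y z) (h3 : HessEq 0 0 cB₃ 4 x y z) (h0 : x (ik 4) = 0) :
    (∀ i, x i = 0) ∧ (∀ i, y i = 0) ∧ z = 0 := by
  obtain ⟨a1, a2, a3⟩ := h1
  obtain ⟨b1, b2, b3⟩ := h2
  obtain ⟨c1, c2, c3⟩ := h3
  simp only [Fin.forall_fin_succ, Fin.sum_univ_succ] at a1 a2 a3 b1 b2 b3 c1 c2 c3 ⊢
  simp [px, py, pz, cB₁, cB₃, ik] at a1 a2 a3 c1 c2 c3 h0 ⊢
  simp [px, py, pz, cA, cB, cC] at b1 b2 b3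
  grind

theorem hess_elim (s : Fin 5) {x y : Fin 4 → ℂ} {z : ℂ} (h1 : HessEq 0 0 cB₁ s x y z)
    (h2 : HessEq cA cC cB s x y z) (h3 : HessEq 0 0 cB₃ s x y z) (h0 : x (ik s) = 0) :
    (∀ i, x i = 0) ∧ (∀ i, y i = 0) ∧ z = 0 := by
  fin_cases s
  · exact hess_elim_0 h1 h2 h3 h0
  · exact hess_elim_1 h1 h2 h3 h0
  · exact hess_elim_2 h1 h2 h3 h0
  · exact hess_elim_3 h1 h2 h3 h0
  · exact hess_elim_4 h1 h2 h3 h0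

/-- At each free point of the example, the kernels of the Hessians of all cubics meet only along the
line through that point. The condition `h0` removes this line. -/
theorem config_hess {k : ℕ} (s : Fin 5) (v : Tau k → ℂ)
    (h : ∀ f, Config k f → ∀ c, ∑ b, eval (ppt k s) (pderiv b (pderiv c f)) * v b = 0)
    (h0 : v (.inl (ik s)) = 0) : v = 0 := by
  have key : ∀ {A C : Fin 4 → Fin 4 → Fin 4 → ℂ} {B : Fin 4 → Fin 4 → Unit ⊕ (Fin k × Fin 3) → ℂ},
      (∀ i i' j, A i i' j = A i' i j) → (∀ i j j', C i j j' = C i j' j) →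
      BaseEq A C (fun i j => B i j (.inl ())) → (∀ b, BlkEq (fun i j r => B i j (.inr (b, r)))) →
      ∀ c, bil (arr A C B) (ppt k s) v c = 0 := by
    intro A C B hA hC h1 h2 c
    have := (hess_arr hA hC _ _ _).symm.trans (h _ (config_of_eq hA hC h1 h2) c)
    simpa using this
  -- the block coordinates of `v` vanish
  have hz : ∀ b r, v (.inr (.inr (.inr (b, r)))) = 0 := by
    intro b
    let B : Fin 4 → Fin 4 → Unit ⊕ (Fin k × Fin 3) → ℂ :=
      fun i j => Sum.elim 0 (blk b (cD i j))
    have hB : ∀ c, bil (arr 0 0 B) (ppt k s) v c = 0 := by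
      refine key (fun _ _ _ => rfl) (fun _ _ _ => rfl) base_zero fun b' => ?_
      rcases eq_or_ne b' b with rfl | hb
      · simpa [B, blk] using blk_eq
      · have e : (fun i j r => B i j (.inr (b', r))) = 0 := by
          funext i j r
          simp [B, blk, hb]
        rw [e]
        exact blk_zero
    have hx : ∀ i, ∑ j, ∑ r, cD i j r * (py s j * v (.inr (.inr (.inr (b, r))))) = 0 := by
      intro i
      have := hB (.inl i)
      rw [bil_x _ _ _ fun _ _ _ => rfl] at this
      simp only [ppt, B, Fintype.sum_sum_type, Sum.elim_inl, Sum.elim_inr, Pi.zero_apply, zero_mul,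
        add_zero, zero_add, Finset.sum_const_zero] at this
      rw [← this]
      refine Finset.sum_congr rfl fun j _ => ?_
      trans ∑ r, py s j * v (.inr (.inr (.inr (b, r)))) * cD i j r
      · exact Finset.sum_congr rfl fun r _ => mul_comm _ _
      · rw [← sum_blk b (cD i j) fun x => py s j * v (.inr (.inr (.inr x)))]
        exact Finset.sum_congr rfl fun r _ => mul_comm _ _
    have hy : ∀ j, ∑ i, ∑ r, cD i j r * (px s i * v (.inr (.inr (.inr (b, r))))) = 0 := by
      intro j
      have := hB (.inr (.inl j))
      rw [bil_y _ _ _ fun _ _ _ => rfl] at this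
      simp only [ppt, B, Fintype.sum_sum_type, Sum.elim_inl, Sum.elim_inr, Pi.zero_apply, zero_mul,
        add_zero, zero_add, Finset.sum_const_zero] at this
      rw [← this]
      refine Finset.sum_congr rfl fun i _ => ?_
      trans ∑ r, px s i * v (.inr (.inr (.inr (b, r)))) * cD i j r
      · exact Finset.sum_congr rfl fun r _ => mul_comm _ _
      · rw [← sum_blk b (cD i j) fun x => px s i * v (.inr (.inr (.inr x)))]
        exact Finset.sum_congr rfl fun r _ => mul_comm _ _
    clear key h hB
    simp [Fin.forall_fin_succ, Fin.sum_univ_succ] at hx hy ⊢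
    fin_cases s <;> simp [px, py, cD] at hx hy <;> grind
  have base : ∀ (A C : Fin 4 → Fin 4 → Fin 4 → ℂ) (B : Fin 4 → Fin 4 → ℂ),
      (∀ i i' j, A i i' j = A i' i j) → (∀ i j j', C i j j' = C i j' j) → BaseEq A C B →
      HessEq A C B s (fun i => v (.inl i)) (fun j => v (.inr (.inl j)))
        (v (.inr (.inr (.inl ())))) := by
    intro A C B hA hC hB
    have hB' : ∀ c, bil (arr A C (fun i j => Sum.elim (fun _ : Unit => B i j)
        (0 : Fin k × Fin 3 → ℂ))) (ppt k s) v c = 0 := key hA hC hB fun b => blk_zero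
    refine ⟨fun i => ?_, fun j => ?_, ?_⟩
    · have := hB' (.inl i)
      rw [bil_x _ _ _ hA] at this
      simpa [ppt] using this
    · have := hB' (.inr (.inl j))
      rw [bil_y _ _ _ hC] at this
      simpa [ppt] using this
    · have := hB' (.inr (.inr (.inl ())))
      rw [bil_z] at this
      simpa [ppt] using this
  have hxyz := hess_elim s (base _ _ _ (fun _ _ _ => rfl) (fun _ _ _ => rfl) base_eq₁)
    (base _ _ _ cA_symm cC_symm base_eq)
    (base _ _ _ (fun _ _ _ => rfl) (fun _ _ _ => rfl) base_eq₃) h0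
  funext c
  rcases c with c | c | (c | ⟨b, c⟩)
  · exact hxyz.1 c
  · exact hxyz.2.1 c
  · exact hxyz.2.2
  · exact hz b c

/-! ### The parameters of a configuration -/

section parameters
variable {n : ℕ}

/-- The index set of the parameters of a configuration. -/
abbrev Par (n : ℕ) := (Fin 2 × Fin (n + 1) × Fin (n - 3)) ⊕
  (Fin 2 × Fin ((4 * n - 14) / 3) × Fin (n - 3)) ⊕ (Fin 5 × Fin (n + 1))

/-- The matrix whose columns span the `κ`-th subspace. -/
def pA (t : Par n → ℂ) (κ : Fin 2) : Matrix (Fin (n + 1)) (Fin (n - 3)) ℂ :=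
  Matrix.of fun i j => t (.inl (κ, i, j))

/-- The singular points on the `κ`-th subspace. -/
noncomputable def pL (t : Par n → ℂ) (κ : Fin 2) (s : Fin ((4 * n - 14) / 3)) : Fin (n + 1) → ℂ :=
  (pA t κ).mulVec fun j => t (.inr (.inl (κ, s, j)))

/-- The five free singular points. -/
def pP (t : Par n → ℂ) (s : Fin 5) : Fin (n + 1) → ℂ := fun i => t (.inr (.inr (s, i)))

/-- The union of the two subspaces. -/
def pU (t : Par n → ℂ) : Set (Fin (n + 1) → ℂ) :=
  Set.range (pA t 0).mulVec ∪ Set.range (pA t 1).mulVec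

/-- The set of all prescribed singular points. -/
def pS (t : Par n → ℂ) : Set (Fin (n + 1) → ℂ) :=
  Set.range (pL t 0) ∪ Set.range (pL t 1) ∪ Set.range (pP t)

theorem isPoly_pA (κ : Fin 2) (u : Fin (n - 3) → ℂ) (i : Fin (n + 1)) :
    IsPoly fun t : Par n → ℂ => (pA t κ).mulVec u i :=
  IsPoly.sum Finset.univ fun j => (IsPoly.coord (Sum.inl (κ, i, j))).mul (IsPoly.const (u j))

theorem isPoly_pL (κ : Fin 2) (s : Fin ((4 * n - 14) / 3)) (i : Fin (n + 1)) :
    IsPoly fun t : Par n → ℂ => pL t κ s i :=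
  IsPoly.sum Finset.univ fun j => (IsPoly.coord (Sum.inl (κ, i, j))).mul
    (IsPoly.coord (Sum.inr (Sum.inl (κ, s, j))))

/-- The linear conditions on cubics that define `SingSpace n 3 (pS t) (pU t)`. -/
noncomputable def cond : ((Fin 2 × (Fin (n - 3) → ℂ)) ⊕
    (Fin 2 × Fin ((4 * n - 14) / 3) × Fin (n + 1)) ⊕ (Fin 5 × Fin (n + 1))) → (Par n → ℂ) →
    Module.Dual ℂ (homogeneousSubmodule (Fin (n + 1)) ℂ 3)
  | .inl (κ, u), t => evalAt ((pA t κ).mulVec u) ∘ₗ Submodule.subtype _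
  | .inr (.inl (κ, s, i)), t => evalPDeriv (pL t κ s) i ∘ₗ Submodule.subtype _
  | .inr (.inr (s, i)), t => evalPDeriv (pP t s) i ∘ₗ Submodule.subtype _

theorem isPoly_cond (j) (f : homogeneousSubmodule (Fin (n + 1)) ℂ 3) :
    IsPoly fun t : Par n → ℂ => cond j t f := by
  rcases j with ⟨κ, u⟩ | ⟨κ, s, i⟩ | ⟨s, i⟩
  · simp only [cond, evalAt, LinearMap.comp_apply, AlgHom.toLinearMap_apply, aeval_eq_eval]
    exact IsPoly.evalPoly (q := fun i t => (pA t κ).mulVec u i) (fun i => isPoly_pA κ u i) _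
  · simp only [cond, LinearMap.comp_apply, evalPDeriv_apply]
    exact IsPoly.evalPoly (q := fun i t => pL t κ s i) (fun i => isPoly_pL κ s i) _
  · simp only [cond, LinearMap.comp_apply, evalPDeriv_apply]
    exact IsPoly.evalPoly (q := fun i t => pP t s i) (fun i => IsPoly.coord _) _

theorem cond_iff (t : Par n → ℂ) (f : homogeneousSubmodule (Fin (n + 1)) ℂ 3) :
    (∀ j, cond j t f = 0) ↔ (f : MvPolynomial _ ℂ) ∈ SingSpace n 3 (pS t) (pU t) := by
  rw [mem_SingSpace]
  simp only [Sum.forall, Prod.forall, cond, evalAt, LinearMap.comp_apply, evalPDeriv_apply,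
    AlgHom.toLinearMap_apply, aeval_eq_eval, Submodule.subtype_apply, Fin.forall_fin_two, pS, pU,
    Set.mem_union, Set.mem_range, or_imp, forall_and, forall_exists_index,
    forall_apply_eq_imp_iff]
  have hf : (f : MvPolynomial (Fin (n + 1)) ℂ).IsHomogeneous 3 := f.2
  change _ ↔ _ ∧ _
  tauto

theorem finrank_cond (t : Par n → ℂ) :
    Module.finrank ℂ (⨅ j, LinearMap.ker (cond j t) : Submodule ℂ _) =
      Module.finrank ℂ (SingSpace n 3 (pS t) (pU t)) := by
  have : (⨅ j, LinearMap.ker (cond j t) : Submodule ℂ _) =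
      (SingSpace n 3 (pS t) (pU t)).comap
        (Submodule.subtype (homogeneousSubmodule (Fin (n + 1)) ℂ 3)) := by
    ext f
    simpa [Submodule.mem_iInf] using cond_iff t f
  rw [this]
  exact (Submodule.comapSubtypeEquivOfLe (SingSpace_le _ _ _)).finrank_eq

/-- The functional `f ↦ T f a b c`. -/
noncomputable def dualT (a b c : Fin (n + 1)) :
    Module.Dual ℂ (homogeneousSubmodule (Fin (n + 1)) ℂ 3) :=
  evalAt 0 ∘ₗ (pderiv a).toLinearMap ∘ₗ (pderiv b).toLinearMap ∘ₗ (pderiv c).toLinearMap ∘ₗ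
    Submodule.subtype _

theorem dualT_apply (a b c : Fin (n + 1)) (f : homogeneousSubmodule (Fin (n + 1)) ℂ 3) :
    dualT a b c f = T (f : MvPolynomial _ ℂ) a b c := by
  simp [dualT, evalAt, T, aeval_eq_eval]

end parameters

section example_point
variable {n k : ℕ} (e : Fin (n + 1) ≃ Tau k) (e' : Fin (n - 3) ≃ Fin 4 ⊕ (Unit ⊕ (Fin k × Fin 3)))
  (e'' : Fin ((4 * n - 14) / 3) ≃ Fin 6 ⊕ (Fin k × Fin 4))

/-- The coordinates on `{x = 0}` and on `{y = 0}`. -/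
def inc {k : ℕ} (κ : Fin 2) : Fin 4 ⊕ (Unit ⊕ (Fin k × Fin 3)) → Tau k :=
  Sum.elim (fun i => if κ = 0 then .inr (.inl i) else .inl i) fun r => .inr (.inr r)

theorem inc_injective (κ : Fin 2) : Function.Injective (inc (k := k) κ) := by
  fin_cases κ <;> rintro (a | a) (b | b) h <;> simp_all [inc]

/-- The singular points of the example on the two subspaces. -/
noncomputable def qpt (k : ℕ) (κ : Fin 2) : Fin 6 ⊕ (Fin k × Fin 4) → Tau k → ℂ :=
  if κ = 0 then lpt k else mpt k

/-- The parameters of the example. -/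
noncomputable def t₀ : Par n → ℂ
  | .inl (κ, i, j) => if e i = inc κ (e' j) then 1 else 0
  | .inr (.inl (κ, s, j)) => qpt k κ (e'' s) (inc κ (e' j))
  | .inr (.inr (s, i)) => ppt k s (e i)

theorem pA_t₀_inc (κ : Fin 2) (u : Fin (n - 3) → ℂ) (j : Fin (n - 3)) :
    (pA (t₀ e e' e'') κ).mulVec u (e.symm (inc κ (e' j))) = u j := by
  simp [pA, t₀, Matrix.mulVec, dotProduct, (inc_injective κ).eq_iff]

theorem pA_t₀_off (κ : Fin 2) (u : Fin (n - 3) → ℂ) {a : Tau k} (ha : ∀ x, a ≠ inc κ x) :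
    (pA (t₀ e e' e'') κ).mulVec u (e.symm a) = 0 := by
  simp [pA, t₀, Matrix.mulVec, dotProduct, ha]

theorem pA_t₀ (κ : Fin 2) {v : Tau k → ℂ} (hv : ∀ a, (∀ x, a ≠ inc κ x) → v a = 0) :
    (pA (t₀ e e' e'') κ).mulVec (fun j => v (inc κ (e' j))) = v ∘ e := by
  funext i
  obtain ⟨a, rfl⟩ := e.symm.surjective i
  by_cases h : ∃ x, a = inc κ x
  · obtain ⟨x, rfl⟩ := h
    obtain ⟨j, rfl⟩ := e'.surjective x
    simp [pA_t₀_inc]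
  · push Not at h
    simp [pA_t₀_off _ _ _ _ _ h, hv a h]

theorem inc_off₀ {a : Tau k} : (∀ x, a ≠ inc 0 x) ↔ ∃ i, a = .inl i := by
  rcases a with i | j | r
  · exact ⟨fun _ => ⟨i, rfl⟩, fun _ => by rintro (x | x) <;> simp [inc]⟩
  · exact ⟨fun h => (h (.inl j) rfl).elim, by simp⟩
  · exact ⟨fun h => (h (.inr r) rfl).elim, by simp⟩

theorem inc_off₁ {a : Tau k} : (∀ x, a ≠ inc 1 x) ↔ ∃ j, a = .inr (.inl j) := by
  rcases a with i | j | r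
  · exact ⟨fun h => (h (.inl i) rfl).elim, by simp⟩
  · exact ⟨fun _ => ⟨j, rfl⟩, fun _ => by rintro (x | x) <;> simp [inc]⟩
  · exact ⟨fun h => (h (.inr r) rfl).elim, by simp⟩

theorem range_pA₀ : Set.range (pA (t₀ e e' e'') 0).mulVec =
    {w | ∃ v : Tau k → ℂ, (∀ i, v (.inl i) = 0) ∧ w = v ∘ e} := by
  ext w
  constructor
  · rintro ⟨u, rfl⟩
    refine ⟨(pA (t₀ e e' e'') 0).mulVec u ∘ e.symm, fun i => ?_, by ext; simp⟩
    exact pA_t₀_off _ _ _ _ _ (inc_off₀.2 ⟨i, rfl⟩)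
  · rintro ⟨v, hv, rfl⟩
    refine ⟨_, pA_t₀ e e' e'' 0 fun a ha => ?_⟩
    obtain ⟨i, rfl⟩ := inc_off₀.1 ha
    exact hv i

theorem range_pA₁ : Set.range (pA (t₀ e e' e'') 1).mulVec =
    {w | ∃ v : Tau k → ℂ, (∀ i, v (.inr (.inl i)) = 0) ∧ w = v ∘ e} := by
  ext w
  constructor
  · rintro ⟨u, rfl⟩
    refine ⟨(pA (t₀ e e' e'') 1).mulVec u ∘ e.symm, fun i => ?_, by ext; simp⟩
    exact pA_t₀_off _ _ _ _ _ (inc_off₁.2 ⟨i, rfl⟩)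
  · rintro ⟨v, hv, rfl⟩
    refine ⟨_, pA_t₀ e e' e'' 1 fun a ha => ?_⟩
    obtain ⟨i, rfl⟩ := inc_off₁.1 ha
    exact hv i

theorem pL_t₀ (κ : Fin 2) (s) : pL (t₀ e e' e'') κ s = qpt k κ (e'' s) ∘ e := by
  refine pA_t₀ e e' e'' κ fun a ha => ?_
  fin_cases κ
  · obtain ⟨i, rfl⟩ := inc_off₀.1 ha
    change lpt k (e'' s) (.inl i) = 0
    rcases e'' s with x | x <;> rfl
  · obtain ⟨i, rfl⟩ := inc_off₁.1 ha
    change mpt k (e'' s) (.inr (.inl i)) = 0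
    rcases e'' s with x | x <;> rfl

theorem pP_t₀ (s) : pP (t₀ e e' e'') s = ppt k s ∘ e := rfl

theorem eval_rename_comp (v : Tau k → ℂ) (f : MvPolynomial (Fin (n + 1)) ℂ) :
    eval (v ∘ e) f = eval v (rename e f) := (eval_rename _ _ _).symm

theorem pderiv_rename' (c : Tau k) (f : MvPolynomial (Fin (n + 1)) ℂ) :
    pderiv c (rename e f) = rename e (pderiv (e.symm c) f) := by
  obtain ⟨i, rfl⟩ := e.surjective c
  rw [pderiv_rename e.injective, e.symm_apply_apply]

theorem T_rename (a b c : Tau k) (f : MvPolynomial (Fin (n + 1)) ℂ) :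
    T (rename e f) a b c = T f (e.symm a) (e.symm b) (e.symm c) := by
  simp only [T, pderiv_rename', ← eval_rename_comp]
  rfl

/-- The cubics of the example, in the two systems of coordinates. -/
theorem config_iff {f : MvPolynomial (Fin (n + 1)) ℂ} (hf : f.IsHomogeneous 3) :
    f ∈ SingSpace n 3 (pS (t₀ e e' e'')) (pU (t₀ e e' e'')) ↔ Config k (rename e f) := by
  rw [mem_SingSpace]
  have h1 : ∀ (v : Tau k → ℂ) i, eval (v ∘ e) (pderiv i f) = eval v (pderiv (e i) (rename e f)) :=
    fun v i => by rw [eval_rename_comp, pderiv_rename e.injective]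
  have key : (∀ v : Tau k → ℂ, (∀ i, eval (v ∘ e) (pderiv i f) = 0) ↔
      ∀ c, eval v (pderiv c (rename e f)) = 0) := fun v => by
    simp only [h1]
    exact e.forall_congr_left.trans (by simp)
  have hl := pL_t₀ e e' e'' 0
  have hm := pL_t₀ e e' e'' 1
  constructor
  · rintro ⟨-, hU, hS⟩
    rw [pU, range_pA₀, range_pA₁] at hU
    refine ⟨hf.rename_isHomogeneous, fun v hv => ?_, fun v hv => ?_, fun s => ?_, fun s => ?_,
      fun s => ?_⟩
    · rw [← eval_rename_comp]
      exact hU _ (.inl ⟨v, hv, rfl⟩)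
    · rw [← eval_rename_comp]
      exact hU _ (.inr ⟨v, hv, rfl⟩)
    · obtain ⟨s, rfl⟩ := e''.surjective s
      exact (key _).1 (hS _ (.inl (.inl ⟨s, hl s⟩)))
    · obtain ⟨s, rfl⟩ := e''.surjective s
      exact (key _).1 (hS _ (.inl (.inr ⟨s, hm s⟩)))
    · exact (key _).1 (hS _ (.inr ⟨s, rfl⟩))
  · intro h
    refine ⟨hf, ?_, ?_⟩
    · rw [pU, range_pA₀, range_pA₁]
      rintro _ (⟨v, hv, rfl⟩ | ⟨v, hv, rfl⟩)
      · rw [eval_rename_comp]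
        exact h.vx v hv
      · rw [eval_rename_comp]
        exact h.vy v hv
    · rintro _ ((⟨s, rfl⟩ | ⟨s, rfl⟩) | ⟨s, rfl⟩)
      · rw [hl]
        exact (key _).2 (h.l (e'' s))
      · rw [hm]
        exact (key _).2 (h.m (e'' s))
      · exact (key _).2 (h.p s)

end example_point

/-! ### Generic configurations -/

section generic
variable {n k : ℕ} (e : Fin (n + 1) ≃ Tau k) (e' : Fin (n - 3) ≃ Fin 4 ⊕ (Unit ⊕ (Fin k × Fin 3)))
  (e'' : Fin ((4 * n - 14) / 3) ≃ Fin 6 ⊕ (Fin k × Fin 4))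

theorem generic_injective (κ : Fin 2) : ∃ F : MvPolynomial (Par n) ℂ, eval (t₀ e e' e'') F ≠ 0 ∧
    ∀ t, eval t F ≠ 0 → Function.Injective (pA t κ).mulVec := by
  obtain ⟨F, hF, h⟩ := semicont_inj
    (fun (i : Fin (n + 1)) (t : Par n → ℂ) => LinearMap.proj i ∘ₗ (pA t κ).mulVecLin)
    (fun i u => isPoly_pA κ u i) (t₀ e e' e'') (fun u hu => by
      funext j
      have := hu (e.symm (inc κ (e' j)))
      rw [← pA_t₀_inc e e' e'' κ u j]
      exact this)
  refine ⟨F, hF, fun t ht => ?_⟩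
  have : Function.Injective (pA t κ).mulVecLin := by
    rw [injective_iff_map_eq_zero]
    exact fun u hu => h t ht u fun i => congrFun hu i
  exact this

/-- Generic subspaces span: a linear functional annihilating both subspaces is zero, which is an
open condition on the matrices and holds for the coordinate subspaces of the example. -/
theorem generic_transverse : ∃ F : MvPolynomial (Par n) ℂ, eval (t₀ e e' e'') F ≠ 0 ∧
    ∀ t, eval t F ≠ 0 →
      LinearMap.range (pA t 0).mulVecLin ⊔ LinearMap.range (pA t 1).mulVecLin = ⊤ := by
  obtain ⟨F, hF, h⟩ := semicont_inj
    (fun (x : Fin 2 × Fin (n - 3)) (t : Par n → ℂ) =>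
      LinearMap.proj x.2 ∘ₗ (pA t x.1).transpose.mulVecLin)
    (fun x u => IsPoly.sum Finset.univ fun i =>
      (IsPoly.coord (Sum.inl (x.1, i, x.2))).mul (IsPoly.const (u i))) (t₀ e e' e'')
    (fun u hu => by
      have key : ∀ κ x, u (e.symm (inc κ x)) = 0 := by
        intro κ x
        obtain ⟨j, rfl⟩ := e'.surjective x
        have h : ∑ i, (if e i = inc κ (e' j) then 1 else 0) * u i = 0 := hu (κ, j)
        simpa [← Equiv.eq_symm_apply] using h
      funext i
      obtain ⟨a, rfl⟩ := e.symm.surjective i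
      rcases a with a | a | a
      · exact key 1 (.inl a)
      · exact key 0 (.inl a)
      · exact key 0 (.inr a))
  refine ⟨F, hF, fun t ht => ?_⟩
  by_contra hne
  obtain ⟨g, hg, hle⟩ := Submodule.exists_le_ker_of_lt_top _ (lt_top_iff_ne_top.2 hne)
  have hgs : ∀ w, g w = ∑ i, w i * g (Pi.single i 1) := fun w => by
    conv_lhs => rw [← (Pi.basisFun ℂ (Fin (n + 1))).sum_repr w]
    simp
  apply hg
  have h0 := h t ht (fun i => g (Pi.single i 1)) (by
    rintro ⟨κ, j⟩
    have hm : (pA t κ).mulVecLin (Pi.single j 1) ∈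
        LinearMap.range (pA t 0).mulVecLin ⊔ LinearMap.range (pA t 1).mulVecLin := by
      fin_cases κ
      · exact Submodule.mem_sup_left ⟨_, rfl⟩
      · exact Submodule.mem_sup_right ⟨_, rfl⟩
    have := hle hm
    rw [LinearMap.mem_ker, hgs] at this
    rw [Matrix.mulVecLin_apply, Matrix.mulVec_single_one] at this
    exact this)
  refine LinearMap.ext fun w => ?_
  rw [hgs]
  exact Finset.sum_eq_zero fun i _ => by rw [show g (Pi.single i 1) = 0 from congrFun h0 i, mul_zero]

/-- For generic parameters the space of cubics has dimension at most `3 + k`; in case of equality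
it contains cubics `G i t` that depend polynomially on `t` and specialize to spanning cubics of the
example. -/
theorem generic_cubics : ∃ F : MvPolynomial (Par n) ℂ, eval (t₀ e e' e'') F ≠ 0 ∧
    ∃ G : Fin 3 ⊕ Fin k → (Par n → ℂ) → homogeneousSubmodule (Fin (n + 1)) ℂ 3,
      (∀ i (l : Module.Dual ℂ _), IsPoly fun t => l (G i t)) ∧
      (∀ g : homogeneousSubmodule (Fin (n + 1)) ℂ 3, Config k (rename e (g : MvPolynomial _ ℂ)) →
        g ∈ Submodule.span ℂ (Set.range fun i => G i (t₀ e e' e''))) ∧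
      ∀ t, eval t F ≠ 0 → Module.finrank ℂ (SingSpace n 3 (pS t) (pU t)) ≤ 3 + k ∧
        (Module.finrank ℂ (SingSpace n 3 (pS t) (pU t)) = 3 + k →
          ∀ i, (G i t : MvPolynomial _ ℂ) ∈ SingSpace n 3 (pS t) (pU t)) := by
  have hc : ∀ f : homogeneousSubmodule (Fin (n + 1)) ℂ 3, (∀ j, cond j (t₀ e e' e'') f = 0) ↔
      Config k (rename e (f : MvPolynomial _ ℂ)) := fun f =>
    (cond_iff _ f).trans (config_iff e e' e'' f.2)
  let D : Fin 3 ⊕ Fin k → Tau k × Tau k × Tau k := Sum.elim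
    ![(.inl 2, .inr (.inl 1), .inr (.inr (.inl ()))), (.inl 3, .inr (.inl 0), .inr (.inr (.inl ()))),
      (.inl 3, .inr (.inl 2), .inr (.inr (.inl ())))]
    fun b => (.inl 3, .inr (.inl 2), .inr (.inr (.inr (b, 2))))
  obtain ⟨F, hF, G, hG, hspan, h⟩ := semicont (D := Fin 3 ⊕ Fin k) cond isPoly_cond (t₀ e e' e'')
    (fun i => dualT (e.symm (D i).1) (e.symm (D i).2.1) (e.symm (D i).2.2)) (by
      intro f hf hD
      simp only [dualT_apply, ← T_rename] at hD
      have := config_elim ((hc f).1 hf) (hD (.inl 0)) (hD (.inl 1)) (hD (.inl 2))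
        fun b => hD (.inr b)
      exact Subtype.ext (rename_injective e e.injective (this.trans (map_zero _).symm)))
  refine ⟨F, hF, G, hG, fun g hg => hspan g ((hc g).2 hg), fun t ht => ?_⟩
  have ht' := h t ht
  rw [finrank_cond, Fintype.card_sum, Fintype.card_fin, Fintype.card_fin] at ht'
  exact ⟨ht'.1, fun h1 i => (cond_iff t _).1 (ht'.2 h1 i)⟩

/-- The Hessian condition at the `s`-th free point passes from the example to generic parameters. -/
theorem generic_hess (G : Fin 3 ⊕ Fin k → (Par n → ℂ) → homogeneousSubmodule (Fin (n + 1)) ℂ 3)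
    (hG : ∀ i (l : Module.Dual ℂ _), IsPoly fun t => l (G i t))
    (hspan : ∀ g : homogeneousSubmodule (Fin (n + 1)) ℂ 3,
      Config k (rename e (g : MvPolynomial _ ℂ)) →
      g ∈ Submodule.span ℂ (Set.range fun i => G i (t₀ e e' e''))) (s : Fin 5) :
    ∃ F : MvPolynomial (Par n) ℂ, eval (t₀ e e' e'') F ≠ 0 ∧ ∀ t, eval t F ≠ 0 →
      ∀ v : Fin (n + 1) → ℂ, (∀ i c, ∑ b, eval (pP t s)
        (pderiv b (pderiv c (G i t : MvPolynomial _ ℂ))) * v b = 0) →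
      v (e.symm (.inl (ik s))) = 0 → v = 0 := by
  -- the gradient of the quadratic form at `v`, as a function of the cubic
  let H : (Fin (n + 1) → ℂ) → (Fin (n + 1) → ℂ) → Fin (n + 1) → MvPolynomial (Fin (n + 1)) ℂ →ₗ[ℂ] ℂ :=
    fun p v c => ∑ b, v b • (evalPDeriv p b ∘ₗ (pderiv c).toLinearMap)
  have hH : ∀ p v c f, H p v c f = ∑ b, eval p (pderiv b (pderiv c f)) * v b := fun p v c f => by
    simp [H, LinearMap.sum_apply, evalPDeriv_apply, mul_comm]
  obtain ⟨F, hF, h⟩ := semicont_inj (E := Fin (n + 1) → ℂ)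
    (J := ((Fin 3 ⊕ Fin k) × Fin (n + 1)) ⊕ Unit)
    (fun j (t : Par n → ℂ) => j.elim
      (fun x => ∑ b, (eval (pP t s) (pderiv b (pderiv x.2 (G x.1 t : MvPolynomial _ ℂ)))) •
        LinearMap.proj b)
      fun _ => LinearMap.proj (e.symm (.inl (ik s))))
    (by
      rintro (⟨i, c⟩ | _) v
      · have : ∀ t : Par n → ℂ, (∑ b, (eval (pP t s) (pderiv b (pderiv c (G i t : MvPolynomial _ ℂ)))) •
            LinearMap.proj (R := ℂ) (φ := fun _ => ℂ) b) v =
            ∑ b, (∑ a, dualT a b c (G i t) * pP t s a) * v b := fun t => by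
          simp only [LinearMap.sum_apply, LinearMap.smul_apply, LinearMap.proj_apply, smul_eq_mul,
            eval_hess (G i t).2, dualT_apply]
        simp only [Sum.elim_inl, this]
        exact IsPoly.sum _ fun b => (IsPoly.sum _ fun a => (hG i _).mul (IsPoly.coord _)).mul
          (IsPoly.const _)
      · exact IsPoly.const _)
    (t₀ e e' e'') (by
      intro v hv
      have h1 : ∀ i c, H (ppt k s ∘ e) v c (G i (t₀ e e' e'') : MvPolynomial _ ℂ) = 0 := by
        intro i c
        rw [hH, ← hv (.inl (i, c))]
        simp [LinearMap.sum_apply, pP_t₀]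
      have h2 : v ∘ e.symm = 0 := by
        refine config_hess s _ (fun f hf c => ?_) (hv (.inr ()))
        have hfe : rename e (rename e.symm f) = f := by
          rw [rename_rename]
          simp
        have hm := hspan ⟨rename e.symm f, hf.homog.rename_isHomogeneous⟩ (by rwa [hfe])
        have h3 : H (ppt k s ∘ e) v (e.symm c) (rename e.symm f) = 0 := by
          have : ∀ g ∈ Submodule.span ℂ (Set.range fun i => G i (t₀ e e' e'')),
              H (ppt k s ∘ e) v (e.symm c) (g : MvPolynomial _ ℂ) = 0 := by
            intro g hg
            induction hg using Submodule.span_induction with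
            | mem x hx =>
              obtain ⟨i, rfl⟩ := hx
              exact h1 i _
            | zero => exact map_zero _
            | add x y _ _ hx hy => rw [Submodule.coe_add, map_add, hx, hy, add_zero]
            | smul a x _ hx => rw [Submodule.coe_smul, map_smul, hx, smul_zero]
          exact this _ hm
        rw [hH] at h3
        rw [← h3, ← e.symm.sum_comp]
        refine Finset.sum_congr rfl fun b _ => ?_
        rw [eval_rename_comp, ← pderiv_rename', ← pderiv_rename', hfe]
        rfl
      funext i
      obtain ⟨a, rfl⟩ := e.symm.surjective i
      exact congrFun h2 a)
  refine ⟨F, hF, fun t ht v hv h0 => h t ht v ?_⟩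
  rintro (⟨i, c⟩ | _)
  · rw [← hv i c]
    simp [LinearMap.sum_apply]
  · exact h0

end generic

/-- All claims hold where the polynomials of the preceding lemmas, and the coordinates which are
nonzero at the free points of the example, do not vanish. -/
theorem generic_all {n k : ℕ} (e : Fin (n + 1) ≃ Tau k)
    (e' : Fin (n - 3) ≃ Fin 4 ⊕ (Unit ⊕ (Fin k × Fin 3)))
    (e'' : Fin ((4 * n - 14) / 3) ≃ Fin 6 ⊕ (Fin k × Fin 4)) (hn : 8 ≤ n) (h3 : n % 3 = 2)
    (hk : n = 8 + 3 * k) :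
    ∃ F : MvPolynomial (Par n) ℂ, F ≠ 0 ∧ ∀ t, eval t F ≠ 0 →
      (∀ κ, Function.Injective (pA t κ).mulVec) ∧
      Module.finrank ℂ (SingSpace n 3 (pS t) (pU t)) = (n + 1) / 3 ∧
      (∀ q ∈ Set.range (pA t 0).mulVec ∩ Set.range (pA t 1).mulVec,
        ∀ f ∈ SingSpace n 3 (pS t) (pU t), SingularAt f q) ∧
      ∀ s : Fin 5, ∃ ε > 0, ∀ q : Fin (n + 1) → ℂ,
        (∀ f ∈ SingSpace n 3 (pS t) (pU t), SingularAt f q) → dist q (pP t s) < ε →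
        ∃ c : ℂ, q = c • pP t s := by
  choose FI hFI hI using generic_injective e e' e''
  obtain ⟨FT, hFT, hT⟩ := generic_transverse e e' e''
  obtain ⟨FC, hFC, G, hG, hspan, hC⟩ := generic_cubics e e' e''
  choose FH hFH hH using generic_hess e e' e'' G hG hspan
  let FX : MvPolynomial (Par n) ℂ := ∏ s, X (.inr (.inr (s, e.symm (.inl (ik s)))))
  have hFX : eval (t₀ e e' e'') FX ≠ 0 := by
    rw [map_prod, Finset.prod_ne_zero_iff]
    intro s _
    rw [eval_X]
    fin_cases s <;> simp [t₀, ppt, px, ik]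
  refine ⟨(∏ κ, FI κ) * FT * FC * (∏ s, FH s) * FX, ?_, fun t ht => ?_⟩
  · intro h
    have h1 := congrArg (eval (t₀ e e' e'')) h
    simp only [map_mul, map_zero, map_prod, mul_eq_zero, Finset.prod_eq_zero_iff] at h1
    rcases h1 with (((⟨κ, -, h1⟩ | h1) | h1) | ⟨s, -, h1⟩) | h1
    · exact hFI κ h1
    · exact hFT h1
    · exact hFC h1
    · exact hFH s h1
    · exact hFX h1
  simp only [map_mul, map_prod, mul_ne_zero_iff, Finset.prod_ne_zero_iff, FX, eval_X,
    Finset.mem_univ, true_imp_iff] at ht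
  obtain ⟨⟨⟨⟨tI, tT⟩, tC⟩, tH⟩, tX⟩ := ht
  have hinj := fun κ => hI κ t (tI κ)
  have htr := hT t tT
  have hU : pU t = ((LinearMap.range (pA t 0).mulVecLin : Submodule ℂ (Fin (n + 1) → ℂ)) ∪
      (LinearMap.range (pA t 1).mulVecLin : Submodule ℂ (Fin (n + 1) → ℂ)) :
      Set (Fin (n + 1) → ℂ)) := rfl
  have hfr : ∀ κ, Module.finrank ℂ (LinearMap.range (pA t κ).mulVecLin) = n - 3 := fun κ => by
    rw [LinearMap.finrank_range_of_inj (hinj κ)]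
    simp
  have hlow : (n + 1) / 3 ≤ Module.finrank ℂ (SingSpace n 3 (pS t) (pU t)) := by
    rw [hU]
    exact lower_bound hn h3 htr (hfr 0) (hfr 1) (pL t 0) (pL t 1) (fun s => ⟨_, rfl⟩)
      (fun s => ⟨_, rfl⟩) (pP t)
  have hd : (n + 1) / 3 = 3 + k := by omega
  have hrank : Module.finrank ℂ (SingSpace n 3 (pS t) (pU t)) = 3 + k :=
    le_antisymm (hC t tC).1 (hd ▸ hlow)
  have hGm := (hC t tC).2 hrank
  refine ⟨hinj, hrank.trans hd.symm, ?_, fun s => ?_⟩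
  · rintro q ⟨hq₀, hq₁⟩ f hf i
    rw [mem_SingSpace] at hf
    rw [evalPDeriv_apply]
    exact singular_inf htr (fun v hv => hf.2.1 v (.inl hv)) (fun v hv => hf.2.1 v (.inr hv))
      hq₀ hq₁ i
  · have hGh : ∀ i, (G i t : MvPolynomial (Fin (n + 1)) ℂ).IsHomogeneous 3 := fun i => (G i t).2
    have hGs : ∀ i c, eval (pP t s) (pderiv c (G i t : MvPolynomial (Fin (n + 1)) ℂ)) = 0 :=
      fun i c => (mem_SingSpace.1 (hGm i)).2.2 (pP t s) (Set.mem_union_right _ ⟨s, rfl⟩) c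
    obtain ⟨ε, hε, h⟩ := isolated _ hGh _ _ (tX s) hGs (hH s t (tH s))
    refine ⟨ε, hε, fun q hq => h q fun i c => ?_⟩
    rw [← evalPDeriv_apply]
    exact hq _ (hGm i) c

end CubicSing

theorem cubics_two_codim4_subspaces (n : ℕ) (hn : 8 ≤ n) (h3 : n % 3 = 2) :
    Generic
      (ι := (Fin 2 × Fin (n + 1) × Fin (n - 3)) ⊕
        (Fin 2 × Fin ((4 * n - 14) / 3) × Fin (n - 3)) ⊕ (Fin 5 × Fin (n + 1))) fun t =>
      let A : Fin 2 → Matrix (Fin (n + 1)) (Fin (n - 3)) ℂ :=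
        fun k => Matrix.of fun i j => t (Sum.inl (k, i, j))
      let pt : Fin 2 → Fin ((4 * n - 14) / 3) → Fin (n + 1) → ℂ :=
        fun k s => (A k).mulVec fun j => t (Sum.inr (Sum.inl (k, s, j)))
      let p : Fin 5 → Fin (n + 1) → ℂ := fun k i => t (Sum.inr (Sum.inr (k, i)))
      let U : Set (Fin (n + 1) → ℂ) := Set.range (A 0).mulVec ∪ Set.range (A 1).mulVec
      let S : Set (Fin (n + 1) → ℂ) := Set.range (pt 0) ∪ Set.range (pt 1) ∪ Set.range p
      (∀ k, Function.Injective (A k).mulVec) ∧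
      Module.finrank ℂ (SingSpace n 3 S U) = (n + 1) / 3 ∧
      (∀ q ∈ Set.range (A 0).mulVec ∩ Set.range (A 1).mulVec,
        ∀ f ∈ SingSpace n 3 S U, SingularAt f q) ∧
      ∀ k : Fin 5, ∃ ε > 0, ∀ q : Fin (n + 1) → ℂ,
        (∀ f ∈ SingSpace n 3 S U, SingularAt f q) → dist q (p k) < ε →
        ∃ c : ℂ, q = c • p k := by
  obtain ⟨k, hk⟩ : ∃ k, n = 8 + 3 * k := ⟨(n - 8) / 3, by omega⟩
  have e : Fin (n + 1) ≃ CubicSing.Tau k := Fintype.equivOfCardEq (by simp; omega)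
  have e' : Fin (n - 3) ≃ Fin 4 ⊕ (Unit ⊕ (Fin k × Fin 3)) :=
    Fintype.equivOfCardEq (by simp; omega)
  have e'' : Fin ((4 * n - 14) / 3) ≃ Fin 6 ⊕ (Fin k × Fin 4) :=
    Fintype.equivOfCardEq (by simp; omega)
  exact CubicSing.generic_all e e' e'' hn h3 hk
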